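/- arXiv:2505.15826 — 2 statements merged into one kernel-verified Lean document; each statement's English description precedes it below -/
import Mathlib

section
/- (Lackner–Panholzer, Theorem 4.5) For all n ≥ 1 and 0 ≤ m ≤ n, the total number M_{n,m} of (n,m)-mapping parking functions equals M_{n,m} = ((n−1)!·m!·n^(n−m)/(n−m)!) · Σ_{j=0}^{m} binomial(2m−n−j, m−j) · (n−j)·(2n)^j / j!, where binomial(a,b) for integer a (possibly negative) and nonnegative integer b denotes the generalized binomial coefficient a(a−1)⋯(a−b+1)/b!, and the identity is an identity of rational numbers. -/
/-- A rooted labelled tree on the vertex set `Fin n`, encoded by its root and its parent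
map: the root is its own parent and every vertex reaches the root by iterating the parent
map (this data is equivalent to a tree on `{1,…,n}` with a distinguished root). -/
structure LabelledRootedTree (n : ℕ) where
  root : Fin n
  parent : Fin n → Fin n
  parent_root : parent root = root
  reaches_root : ∀ v : Fin n, ∃ k : ℕ, parent^[k] v = root

/-- The parking procedure driven by a step map `f` on `Fin n` (the parent map of a tree, or
an `n`-mapping).  `occ` is the list of occupied vertices; the drivers in the list arrive in
order, and the driver starting at `v` parks at `f^[i] v` for the least `i` such that
`f^[i] v` is unoccupied (searching `i < n` suffices, since the forward orbit of `v` has at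
most `n` distinct vertices, all appearing among the first `n` iterates, in visit order).
The result is `none` if some driver finds every vertex on its route occupied. -/
def parkAux (n : ℕ) (f : Fin n → Fin n) : List (Fin n) → List (Fin n) → Option (List (Fin n))
  | occ, [] => some occ
  | occ, v :: rest =>
    match (List.range n).find? (fun i => decide (f^[i] v ∉ occ)) with
    | none => none
    | some i => parkAux n f (f^[i] v :: occ) rest

/-- `s : Fin m → Fin n` is a parking function for the step map `f` on `Fin n`:
all `m` drivers, arriving in order with preferences `s 1, …, s m`, park successfully. -/
def ParkingSucceeds {n m : ℕ} (f : Fin n → Fin n) (s : Fin m → Fin n) : Prop :=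
  (parkAux n f [] (List.ofFn s)).isSome

/-- `s` is a tree parking function for the rooted labelled tree `T`: each driver `k` starts
at `s k` and drives towards the root, parking at the first unoccupied vertex. -/
def IsTreeParking {n m : ℕ} (T : LabelledRootedTree n) (s : Fin m → Fin n) : Prop :=
  ParkingSucceeds T.parent s

/-- `M_{n,m}`: the number of pairs `(f, s)` with `f` an `n`-mapping and
`s ∈ {1,…,n}^m` a mapping parking function for `f`. -/
noncomputable def MCount (n m : ℕ) : ℕ :=
  Nat.card {p : (Fin n → Fin n) × (Fin m → Fin n) // ParkingSucceeds p.1 p.2}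

/-- `F_{n,m}`: the number of pairs `(T, s)` with `T` a rooted labelled tree on `{1,…,n}`
and `s ∈ {1,…,n}^m` a tree parking function for `T`. -/
noncomputable def FCount (n m : ℕ) : ℕ :=
  Nat.card {p : LabelledRootedTree n × (Fin m → Fin n) // IsTreeParking p.1 p.2}

/-- The generalized binomial coefficient `binomial(a,b) = a(a-1)⋯(a-b+1)/b!` for an
arbitrary integer `a` and a natural number `b`, as a rational number. -/
def genChoose (a : ℤ) (b : ℕ) : ℚ :=
  (∏ i ∈ Finset.range b, ((a : ℚ) - (i : ℚ))) / (Nat.factorial b : ℚ)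


namespace LP
open Finset
open scoped Classical

noncomputable def cnt {A C : Type} [Fintype C] (s : C → A) (B : Finset A) : ℕ :=
  ∑ c, if s c ∈ B then 1 else 0

def GoodOn {A C : Type} [Fintype C] (f : A → A) (O : Finset A) (s : C → A) : Prop :=
  Fintype.card C = O.card ∧ (∀ c, s c ∈ O) ∧
    ∀ B ⊆ O, (∀ u ∈ O, f u ∈ B → u ∈ B) → B.card ≤ cnt s B

inductive Reach {A : Type} (f : A → A) (O : Finset A) : A → A → Prop
  | here (v : A) : v ∉ O → Reach f O v v
  | step (x v : A) : x ∈ O → Reach f O (f x) v → Reach f O x v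

theorem Reach.not_mem {A : Type} {f : A → A} {O : Finset A} {x v : A} (h : Reach f O x v) :
    v ∉ O := by
  induction h with
  | here v h => exact h
  | step x v hx h ih => exact ih

theorem Reach.unique {A : Type} {f : A → A} {O : Finset A} {x v w : A} (h : Reach f O x v)
    (h' : Reach f O x w) : v = w := by
  induction h with
  | here v h => cases h' with
    | here => rfl
    | step _ _ hx => exact absurd hx h
  | step x v hx h ih => cases h' with
    | here _ h => exact absurd hx h
    | step _ _ _ h => exact ih h

theorem Reach.back {A : Type} [DecidableEq A] {f : A → A} {O B : Finset A} {x v : A} (h : Reach f O x v)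
    (hB : ∀ u ∈ insert v O, f u ∈ B → u ∈ B) (hv : v ∈ B) : x ∈ B := by
  induction h with
  | here v h => exact hv
  | step x v hx h ih => exact hB x (by simp [hx]) (ih hB hv)

theorem cnt_snoc {A : Type} {m : ℕ} (s : Fin m → A) (x : A) (B : Finset A) :
    cnt (Fin.snoc s x : Fin (m+1) → A) B = cnt s B + if x ∈ B then 1 else 0 := by
  unfold cnt
  rw [Fin.sum_univ_castSucc]
  simp only [Fin.snoc_castSucc, Fin.snoc_last]

theorem good_snoc {A : Type} [DecidableEq A] {m : ℕ} {f : A → A} {P : Finset A} {s : Fin m → A} {x v : A}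
    (h : GoodOn f P s) (hr : Reach f P x v) :
    GoodOn f (insert v P) (Fin.snoc s x : Fin (m+1) → A) := by
  obtain ⟨h1, h2, h3⟩ := h
  have hv := hr.not_mem
  refine ⟨?_, ?_, ?_⟩
  · rw [card_insert_of_notMem hv, ← h1]; simp
  · intro c
    refine Fin.lastCases ?_ (fun i => ?_) c
    · simp only [Fin.snoc_last]
      cases hr with
      | here => simp
      | step _ _ hx => simp [hx]
    · simp [h2]
  · intro B hB hc
    have e1 : B.erase v ⊆ P := by
      intro u hu
      have := hB (mem_of_mem_erase hu)
      rcases mem_insert.1 this with h | h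
      · exact absurd h (ne_of_mem_erase hu)
      · exact h
    have e2 := h3 _ e1 (by
      intro u hu hf
      refine mem_erase.2 ⟨fun h => hv (h ▸ hu), hc u (by simp [hu]) (mem_of_mem_erase hf)⟩)
    have e3 : cnt s (B.erase v) = cnt s B := by
      unfold cnt
      refine sum_congr rfl fun c _ => ?_
      have : s c ≠ v := fun h => hv (h ▸ h2 c)
      simp [this]
    rw [e3] at e2
    rw [cnt_snoc]
    by_cases hvB : v ∈ B
    · have := hr.back hc hvB
      rw [if_pos this]
      have := card_erase_add_one hvB
      omega
    · rw [erase_eq_of_notMem hvB] at e2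
      omega

def GoodSub {A C : Type} [Fintype C] (f : A → A) (O : Finset A) (s : C → A) : Prop :=
  (∀ c, s c ∈ O) ∧ ∀ W ⊆ O, (∀ u ∈ W, f u ∈ O → f u ∈ W) → cnt s W ≤ W.card

theorem GoodOn.sub {A C : Type} [Fintype C] {f : A → A} {O : Finset A} {s : C → A}
    (h : GoodOn f O s) : GoodSub f O s := by
  obtain ⟨h1, h2, h3⟩ := h
  refine ⟨h2, fun W hW hc => ?_⟩
  have := h3 (O \ W) sdiff_subset (by
    intro u hu hf
    rw [mem_sdiff] at hf ⊢
    exact ⟨hu, fun h => hf.2 (hc u h hf.1)⟩)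
  have e : cnt s (O \ W) + cnt s W = O.card := by
    rw [← h1]
    unfold cnt
    rw [← sum_add_distrib]
    trans ∑ c : C, 1
    · refine sum_congr rfl fun c _ => ?_
      have := h2 c
      by_cases h : s c ∈ W <;> simp [h, this]
    · simp
  have := card_sdiff_add_card_eq_card hW
  omega

theorem GoodSub.init {A : Type} {m : ℕ} {f : A → A} {O : Finset A} {s : Fin m → A} {x : A}
    (h : GoodSub f O (Fin.snoc s x : Fin (m+1) → A)) : GoodSub f O s := by
  refine ⟨fun c => by simpa using h.1 c.castSucc, fun W hW hc => ?_⟩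
  have := h.2 W hW hc
  rw [cnt_snoc] at this
  omega

theorem good_step {A : Type} {m : ℕ} {f : A → A} {P O : Finset A} {s : Fin m → A} {x : A}
    (h : GoodOn f P s) (hP : P ⊆ O) (hs : GoodSub f O (Fin.snoc s x : Fin (m+1) → A)) :
    ∃ v ∈ O, Reach f P x v := by
  have hx : x ∈ O := by simpa using hs.1 (Fin.last m)
  by_cases hxP : x ∈ P
  swap
  · exact ⟨x, hx, .here _ hxP⟩
  by_contra hcon
  let W := P.filter (fun u => ¬ ∃ v ∈ O, Reach f P u v)
  have h1 := hs.2 W ((filter_subset _ _).trans hP) (by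
    intro u hu hf
    simp only [W, mem_filter] at hu ⊢
    have hfp : f u ∈ P := by
      by_contra hh
      exact hu.2 ⟨f u, hf, .step _ _ hu.1 (.here _ hh)⟩
    exact ⟨hfp, fun ⟨v, hv, hr⟩ => hu.2 ⟨v, hv, .step _ _ hu.1 hr⟩⟩)
  have h2 := h.2.2 W (filter_subset _ _) (by
    intro u hu hf
    simp only [W, mem_filter] at hf ⊢
    refine ⟨hu, fun ⟨v, hv, hr⟩ => hf.2 ⟨v, hv, ?_⟩⟩
    cases hr with
    | here _ h => exact absurd hu h
    | step _ _ _ h => exact h)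
  rw [cnt_snoc, if_pos (by simp only [W, mem_filter]; exact ⟨hxP, hcon⟩)] at h1
  omega

theorem reach_iff {A : Type} {f : A → A} {O : Finset A} {x v : A} :
    Reach f O x v ↔ ∃ i, f^[i] x = v ∧ v ∉ O ∧ ∀ j < i, f^[j] x ∈ O := by
  constructor
  · intro h
    induction h with
    | here v h => exact ⟨0, rfl, h, by simp⟩
    | step x v hx h ih =>
      obtain ⟨i, h1, h2, h3⟩ := ih
      refine ⟨i+1, h1, h2, fun j hj => ?_⟩
      cases j with
      | zero => exact hx
      | succ j => exact h3 j (by omega)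
  · rintro ⟨i, h1, h2, h3⟩
    induction i generalizing x with
    | zero => obtain rfl : x = v := h1
              exact .here _ h2
    | succ i ih =>
      exact .step _ _ (h3 0 (by omega)) (ih h1 (fun j hj => h3 (j+1) (by omega)))

theorem reach_find {n : ℕ} {f : Fin n → Fin n} {occ : List (Fin n)} {x v : Fin n}
    (h : Reach f occ.toFinset x v) :
    ∃ i, (List.range n).find? (fun i => decide (f^[i] x ∉ occ)) = some i ∧ f^[i] x = v := by
  obtain ⟨i, h1, h2, h3⟩ := reach_iff.1 h
  have hi : i < n := by
    have : Function.Injective (fun j : Fin (i+1) => f^[j.1] x) := by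
      have key : ∀ a b : ℕ, a < b → b ≤ i → f^[a] x ≠ f^[b] x := by
        intro a b hab hb he
        have : f^[i - b + a] x = f^[i - b + b] x := by
          rw [Function.iterate_add_apply, Function.iterate_add_apply, he]
        rw [Nat.sub_add_cancel hb, h1] at this
        exact h2 (this ▸ h3 _ (by omega))
      intro a b he
      rcases lt_trichotomy a.1 b.1 with h | h | h
      · exact absurd he (key _ _ h (by omega))
      · exact Fin.ext h
      · exact absurd he.symm (key _ _ h (by omega))
    have := Fintype.card_le_of_injective _ this
    simp at this
    omega
  refine ⟨i, ?_, h1⟩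
  rw [List.find?_range_eq_some]
  refine ⟨by simpa [h1] using h2, by simpa using hi, fun j hj => ?_⟩
  simpa using h3 j hj

theorem find_reach {n : ℕ} {f : Fin n → Fin n} {occ : List (Fin n)} {x : Fin n} {i : ℕ}
    (h : (List.range n).find? (fun i => decide (f^[i] x ∉ occ)) = some i) :
    Reach f occ.toFinset x (f^[i] x) := by
  rw [List.find?_range_eq_some] at h
  refine reach_iff.2 ⟨i, rfl, by simpa using h.1, fun j hj => by simpa using h.2.2 j hj⟩

theorem parkAux_append {n : ℕ} (f : Fin n → Fin n) (L : List (Fin n)) (x : Fin n)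
    (occ : List (Fin n)) :
    parkAux n f occ (L ++ [x]) = (parkAux n f occ L).bind (fun o =>
      ((List.range n).find? (fun i => decide (f^[i] x ∉ o))).map (fun i => f^[i] x :: o)) := by
  induction L generalizing occ with
  | nil =>
    simp only [List.nil_append, parkAux, Option.bind_some]
    cases (List.range n).find? (fun i => decide (f^[i] x ∉ occ)) <;> rfl
  | cons y L ih =>
    simp only [List.cons_append, parkAux]
    cases (List.range n).find? (fun i => decide (f^[i] y ∉ occ)) with
    | none => rfl
    | some i => exact ih _

theorem ofFn_snoc {A : Type} {m : ℕ} (s : Fin m → A) (x : A) :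
    List.ofFn (Fin.snoc s x : Fin (m+1) → A) = List.ofFn s ++ [x] := by
  rw [List.ofFn_succ']
  simp

theorem good_zero {A : Type} {f : A → A} {s : Fin 0 → A} : GoodOn f ∅ s := by
  refine ⟨by simp, fun c => c.elim0, fun B hB _ => ?_⟩
  rw [subset_empty.1 hB]; simp

theorem park_good {n m : ℕ} {f : Fin n → Fin n} {s : Fin m → Fin n} {occ : List (Fin n)}
    (h : parkAux n f [] (List.ofFn s) = some occ) : GoodOn f occ.toFinset s := by
  induction m generalizing occ with
  | zero =>
    simp [parkAux] at h
    subst h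
    simpa using good_zero
  | succ m ih =>
    obtain ⟨s, x, rfl⟩ : ∃ s' x, s = Fin.snoc s' x :=
      ⟨Fin.init s, s (Fin.last m), (Fin.snoc_init_self s).symm⟩
    rw [ofFn_snoc, parkAux_append, Option.bind_eq_some_iff] at h
    obtain ⟨o, h1, h2⟩ := h
    rw [Option.map_eq_some_iff] at h2
    obtain ⟨i, h3, rfl⟩ := h2
    rw [List.toFinset_cons]
    exact good_snoc (ih h1) (find_reach h3)

theorem good_park {n m : ℕ} {f : Fin n → Fin n} {s : Fin m → Fin n} {O : Finset (Fin n)}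
    (h : GoodSub f O s) : ∃ occ, parkAux n f [] (List.ofFn s) = some occ ∧ occ.toFinset ⊆ O := by
  induction m with
  | zero => exact ⟨[], by simp [parkAux], by simp⟩
  | succ m ih =>
    obtain ⟨s, x, rfl⟩ : ∃ s' x, s = Fin.snoc s' x :=
      ⟨Fin.init s, s (Fin.last m), (Fin.snoc_init_self s).symm⟩
    obtain ⟨o, h1, h2⟩ := ih h.init
    obtain ⟨v, hv, hr⟩ := good_step (park_good h1) h2 h
    obtain ⟨i, h3, rfl⟩ := reach_find hr
    refine ⟨f^[i] x :: o, ?_, ?_⟩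
    · rw [ofFn_snoc, parkAux_append, h1, Option.bind_some, h3]; rfl
    · rw [List.toFinset_cons]
      exact insert_subset hv h2

theorem good_park_eq {n m : ℕ} {f : Fin n → Fin n} {s : Fin m → Fin n} {O : Finset (Fin n)}
    (h : GoodOn f O s) : ∃ occ, parkAux n f [] (List.ofFn s) = some occ ∧ occ.toFinset = O := by
  obtain ⟨occ, h1, h2⟩ := good_park h.sub
  refine ⟨occ, h1, eq_of_subset_of_card_le h2 ?_⟩
  rw [← h.1, ← (park_good h1).1]

theorem good_unique {n m : ℕ} {f : Fin n → Fin n} {s : Fin m → Fin n} {O P : Finset (Fin n)}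
    (h : GoodOn f O s) (h' : GoodOn f P s) : O = P := by
  obtain ⟨o, h1, rfl⟩ := good_park_eq h
  obtain ⟨o', h2, rfl⟩ := good_park_eq h'
  rw [h1] at h2
  cases h2
  rfl

theorem park_iff {n m : ℕ} {f : Fin n → Fin n} {s : Fin m → Fin n} :
    ParkingSucceeds f s ↔ ∃ O, GoodOn f O s := by
  unfold ParkingSucceeds
  rw [Option.isSome_iff_exists]
  constructor
  · rintro ⟨o, h⟩; exact ⟨_, park_good h⟩
  · rintro ⟨O, h⟩
    obtain ⟨o, h1, -⟩ := good_park_eq h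
    exact ⟨o, h1⟩

theorem good_snoc_iff {n m : ℕ} {f : Fin n → Fin n} {s : Fin m → Fin n} {x : Fin n}
    {O : Finset (Fin n)} :
    GoodOn f O (Fin.snoc s x : Fin (m+1) → Fin n) ↔
      ∃ v ∈ O, GoodOn f (O.erase v) s ∧ Reach f (O.erase v) x v := by
  constructor
  · intro h
    obtain ⟨o, h1, h2⟩ := good_park h.sub.init
    have hg := park_good h1
    obtain ⟨v, hv, hr⟩ := good_step hg h2 h.sub
    have := good_unique h (good_snoc hg hr)
    refine ⟨v, hv, ?_⟩
    rw [this, erase_insert hr.not_mem]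
    exact ⟨hg, hr⟩
  · rintro ⟨v, hv, hg, hr⟩
    have := good_snoc hg hr
    rwa [insert_erase hv] at this

theorem good_snoc_unique {n m : ℕ} {f : Fin n → Fin n} {s : Fin m → Fin n}
    {O : Finset (Fin n)} {v w : Fin n} (hw : w ∈ O)
    (h1 : GoodOn f (O.erase v) s) (h2 : GoodOn f (O.erase w) s) : v = w := by
  have := good_unique h1 h2
  by_contra hne
  have h : w ∈ O.erase v := mem_erase.2 ⟨Ne.symm hne, hw⟩
  rw [this] at h
  simp at h

theorem good_card_filter (n m : ℕ) (O : Finset (Fin n)) :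
    Nat.card {p : (Fin n → Fin n) × (Fin (m+1) → Fin n) // GoodOn p.1 O p.2} =
      ∑ v ∈ O, Nat.card {p : ((Fin n → Fin n) × (Fin m → Fin n)) × Fin n //
        GoodOn p.1.1 (O.erase v) p.1.2 ∧ Reach p.1.1 (O.erase v) p.2 v} := by
  have e : Nat.card {p : (Fin n → Fin n) × (Fin (m+1) → Fin n) // GoodOn p.1 O p.2} =
      Nat.card {p : ((Fin n → Fin n) × (Fin m → Fin n)) × Fin n // ∃ v ∈ O,
        GoodOn p.1.1 (O.erase v) p.1.2 ∧ Reach p.1.1 (O.erase v) p.2 v} := by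
    symm
    refine Nat.card_eq_of_bijective
      (fun p => ⟨(p.1.1.1, Fin.snoc p.1.1.2 p.1.2), good_snoc_iff.2 p.2⟩) ⟨?_, ?_⟩
    · rintro ⟨⟨⟨f, s⟩, x⟩, h⟩ ⟨⟨⟨f', s'⟩, x'⟩, h'⟩ he
      simp only [Subtype.mk.injEq, Prod.mk.injEq] at he
      obtain ⟨rfl, he⟩ := he
      obtain ⟨rfl, rfl⟩ := Fin.snoc_injective2 he
      rfl
    · rintro ⟨⟨f, s⟩, h⟩
      obtain ⟨s, x, rfl⟩ : ∃ s' x, s = Fin.snoc s' x :=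
        ⟨Fin.init s, s (Fin.last m), (Fin.snoc_init_self s).symm⟩
      exact ⟨⟨((f, s), x), good_snoc_iff.1 h⟩, rfl⟩
  rw [e]
  simp only [Nat.card_eq_fintype_card, Fintype.card_subtype]
  rw [← card_biUnion]
  · congr 1
    ext p
    simp
  · intro v hv w hw hne
    rw [Function.onFun, disjoint_left]
    intro p hp hp'
    simp only [mem_filter, mem_univ, true_and] at hp hp'
    exact hne (good_snoc_unique hw hp.1 hp'.1)

theorem mcount_eq (n m : ℕ) : MCount n m = ∑ O ∈ powersetCard m (univ : Finset (Fin n)),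
    Nat.card {p : (Fin n → Fin n) × (Fin m → Fin n) // GoodOn p.1 O p.2} := by
  unfold MCount
  simp only [Nat.card_eq_fintype_card, Fintype.card_subtype]
  rw [← card_biUnion]
  · congr 1
    ext p
    simp only [mem_filter, mem_univ, true_and, mem_biUnion, mem_powersetCard, subset_univ, park_iff]
    constructor
    · rintro ⟨O, h⟩; exact ⟨O, by simpa using h.1.symm, h⟩
    · rintro ⟨O, -, h⟩; exact ⟨O, h⟩
  · intro v hv w hw hne
    rw [Function.onFun, disjoint_left]
    intro p hp hp'
    simp only [mem_filter, mem_univ, true_and] at hp hp'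
    exact hne (good_unique hp hp')

end LP

namespace LP
open Finset
open scoped Classical

def Good {V E C : Type} [Fintype V] [Fintype C] (f : V → V ⊕ E) (s : C → V) : Prop :=
  Fintype.card C = Fintype.card V ∧
    ∀ B : Finset V, (∀ u w, f u = Sum.inl w → w ∈ B → u ∈ B) → B.card ≤ cnt s B

abbrev Cfg (V E C : Type) [Fintype V] [Fintype C] : Type :=
  {p : (V → V ⊕ E) × (C → V) // Good p.1 p.2}

inductive RN {V E : Type} (f : V → V ⊕ Option E) : V → Prop
  | base (u : V) : f u = Sum.inr none → RN f u
  | step (u w : V) : f u = Sum.inl w → RN f w → RN f u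

noncomputable def predF {V E : Type} [Fintype V] (f : V → V ⊕ Option E) : Finset V :=
  univ.filter (RN f)

def glueF {A V E : Type} (e : A ≃ V ⊕ E) (f : V → V ⊕ E) (g : E → A) : A → A :=
  fun a => Sum.elim (fun u => e.symm (f u)) g (e a)

def emb {A V E : Type} (e : A ≃ V ⊕ E) : V ↪ A := ⟨fun u => e.symm (Sum.inl u), fun u w h => by
  simpa using h⟩

theorem emb_apply {A V E : Type} (e : A ≃ V ⊕ E) (u : V) : emb e u = e.symm (Sum.inl u) := rfl

theorem cnt_map {A V C : Type} [Fintype C] (i : V ↪ A) (s : C → V) (B : Finset V) :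
    cnt (fun c => i (s c)) (B.map i) = cnt s B := by
  unfold cnt
  refine sum_congr rfl fun c _ => ?_
  simp

theorem glue_good {A V E C : Type} [Fintype V] [Fintype C] (e : A ≃ V ⊕ E)
    (f : V → V ⊕ E) (g : E → A) (s : C → V) :
    GoodOn (glueF e f g) (univ.map (emb e)) (fun c => emb e (s c)) ↔ Good f s := by
  have key : ∀ B : Finset V, (∀ u ∈ univ.map (emb e), glueF e f g u ∈ B.map (emb e) →
      u ∈ B.map (emb e)) ↔ (∀ u w, f u = Sum.inl w → w ∈ B → u ∈ B) := by
    intro B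
    constructor
    · intro h u w hf hw
      have := h (emb e u) (by simp) (by simp [glueF, emb_apply, hf, hw])
      simpa using this
    · intro h u hu
      obtain ⟨u, -, rfl⟩ := mem_map.1 hu
      intro h'
      obtain ⟨w, hw, he⟩ := mem_map.1 h'
      have : f u = Sum.inl w := by
        simpa [glueF, emb_apply, eq_comm] using he
      exact mem_map_of_mem _ (h u w this hw)
  unfold GoodOn Good
  constructor
  · rintro ⟨h1, -, h3⟩
    refine ⟨by simpa using h1, fun B hB => ?_⟩
    have := h3 (B.map (emb e)) (map_subset_map.2 (subset_univ _)) ((key B).2 hB)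
    rwa [cnt_map, card_map] at this
  · rintro ⟨h1, h3⟩
    refine ⟨by simpa using h1, fun c => by simp, fun B hB hc => ?_⟩
    obtain ⟨B, -, rfl⟩ := subset_map_iff.1 hB
    rw [cnt_map, card_map]
    exact h3 B ((key B).1 hc)

noncomputable def bridge {A V E C : Type} [Fintype V] [Fintype C] (e : A ≃ V ⊕ E) :
    (E → A) × Cfg V E C → {p : (A → A) × (C → A) // GoodOn p.1 (univ.map (emb e)) p.2} :=
  fun q => ⟨(glueF e q.2.1.1 q.1, fun c => emb e (q.2.1.2 c)), (glue_good e _ _ _).2 q.2.2⟩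

theorem bridge_bij {A V E C : Type} [Fintype V] [Fintype C] (e : A ≃ V ⊕ E) :
    Function.Bijective (bridge e : (E → A) × Cfg V E C → _) := by
  constructor
  · rintro ⟨g, ⟨f, s⟩, h⟩ ⟨g', ⟨f', s'⟩, h'⟩ he
    simp only [bridge, Subtype.mk.injEq, Prod.mk.injEq] at he
    obtain ⟨h1, h2⟩ := he
    obtain rfl : g = g' := by
      funext x
      simpa [glueF] using congrFun h1 (e.symm (Sum.inr x))
    obtain rfl : f = f' := by
      funext x
      simpa [glueF] using congrFun h1 (e.symm (Sum.inl x))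
    obtain rfl : s = s' := by
      funext c
      exact (emb e).injective (congrFun h2 c)
    rfl
  · rintro ⟨⟨f, s⟩, h⟩
    have hs : ∀ c, ∃ u, emb e u = s c := fun c => by simpa using h.2.1 c
    choose s' hs' using hs
    obtain rfl : (fun c => emb e (s' c)) = s := funext hs'
    have hf : glueF e (fun u => e (f (e.symm (Sum.inl u)))) (fun x => f (e.symm (Sum.inr x))) = f := by
      funext a
      rcases h : e a with u | x
      · obtain rfl : a = e.symm (Sum.inl u) := by rw [← h]; simp
        simp [glueF]
      · obtain rfl : a = e.symm (Sum.inr x) := by rw [← h]; simp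
        simp [glueF]
    refine ⟨⟨fun x => f (e.symm (Sum.inr x)), ⟨(fun u => e (f (e.symm (Sum.inl u))), s'), ?_⟩⟩, ?_⟩
    · rw [← glue_good e _ (fun x => f (e.symm (Sum.inr x))), hf]
      exact h
    · simp only [bridge, Subtype.mk.injEq, Prod.mk.injEq]
      exact ⟨hf, trivial⟩

theorem bridge_card {A V E C : Type} [Fintype A] [Fintype E] [Fintype V] [Fintype C]
    (e : A ≃ V ⊕ E) :
    Nat.card {p : (A → A) × (C → A) // GoodOn p.1 (univ.map (emb e)) p.2} =
      Fintype.card A ^ Fintype.card E * Nat.card (Cfg V E C) := by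
  rw [← Nat.card_eq_of_bijective _ (bridge_bij e), Nat.card_prod]
  simp

theorem glue_reach {A V E : Type} [Fintype V] (e : A ≃ V ⊕ Option E)
    (f : V → V ⊕ Option E) (g : Option E → A) (x : A) :
    Reach (glueF e f g) (univ.map (emb e)) x (e.symm (Sum.inr none)) ↔
      x = e.symm (Sum.inr none) ∨ ∃ u ∈ predF f, x = emb e u := by
  have hO : ∀ a, a ∈ univ.map (emb e) ↔ ∃ u, e.symm (Sum.inl u) = a := fun a => by simp [emb_apply]
  have hnone : e.symm (Sum.inr none) ∉ univ.map (emb e) := by simp [hO]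
  constructor
  · intro h
    generalize hv : e.symm (Sum.inr none) = v at h
    induction h with
    | here v h => exact Or.inl rfl
    | step x v hx h ih =>
      right
      obtain ⟨u, rfl⟩ := (hO _).1 hx
      refine ⟨u, ?_, rfl⟩
      have hg : glueF e f g (e.symm (Sum.inl u)) = e.symm (f u) := by simp [glueF]
      rw [hg] at ih
      simp only [predF, mem_filter, mem_univ, true_and]
      rcases ih hv with h | ⟨w, hw, h⟩
      · rw [← hv] at h
        exact .base _ (by simpa using h)
      · exact .step _ w (by simpa [emb_apply] using h) (by simpa [predF] using hw)
  · rintro (rfl | ⟨u, hu, rfl⟩)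
    · exact .here _ hnone
    · have hu : RN f u := by simpa [predF] using hu
      have hg : ∀ u, glueF e f g (emb e u) = e.symm (f u) := by simp [glueF, emb_apply]
      induction hu with
      | base u h => exact .step _ _ (by simp) (by rw [hg, h]; exact .here _ hnone)
      | step u w h h' ih => exact .step _ _ (by simp) (by rw [hg, h]; exact ih (by simpa [predF] using h'))

theorem reach_card {A V E : Type} [Fintype A] [Fintype V] (e : A ≃ V ⊕ Option E)
    (f : V → V ⊕ Option E) (g : Option E → A) :
    Nat.card {x // Reach (glueF e f g) (univ.map (emb e)) x (e.symm (Sum.inr none))} =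
      (predF f).card + 1 := by
  rw [Nat.card_eq_fintype_card, Fintype.card_subtype]
  have : univ.filter (fun x => Reach (glueF e f g) (univ.map (emb e)) x (e.symm (Sum.inr none))) =
      insert (e.symm (Sum.inr none)) ((predF f).map (emb e)) := by
    ext x
    simp only [mem_filter, mem_univ, true_and, glue_reach, mem_insert, mem_map]
    simp only [eq_comm]
  rw [this, card_insert_of_notMem (by simp [emb_apply]), card_map]

theorem bridge_reach_card {A V E C : Type} [Fintype A] [Fintype E] [Fintype V] [Fintype C]
    (e : A ≃ V ⊕ Option E) :
    Nat.card {p : ((A → A) × (C → A)) × A //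
      GoodOn p.1.1 (univ.map (emb e)) p.1.2 ∧
        Reach p.1.1 (univ.map (emb e)) p.2 (e.symm (Sum.inr none))} =
      Fintype.card A ^ (Fintype.card E + 1) *
        ∑ p : Cfg V (Option E) C, ((predF p.1.1).card + 1) := by
  have e1 : {p : ((A → A) × (C → A)) × A //
      GoodOn p.1.1 (univ.map (emb e)) p.1.2 ∧
        Reach p.1.1 (univ.map (emb e)) p.2 (e.symm (Sum.inr none))} ≃
      Σ q : {p : (A → A) × (C → A) // GoodOn p.1 (univ.map (emb e)) p.2},
        {x // Reach q.1.1 (univ.map (emb e)) x (e.symm (Sum.inr none))} :=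
    ⟨fun p => ⟨⟨p.1.1, p.2.1⟩, ⟨p.1.2, p.2.2⟩⟩, fun q => ⟨(q.1.1, q.2.1), q.1.2, q.2.2⟩,
      fun p => rfl, fun q => rfl⟩
  rw [Nat.card_congr e1, Nat.card_sigma, ← (bridge_bij (C := C) e).sum_comp, Fintype.sum_prod_type]
  simp only [bridge, reach_card]
  rw [sum_const, smul_eq_mul]
  simp

end LP

namespace LP
open Finset
open scoped Classical

abbrev TCfg (V C : Type) [Fintype V] [Fintype C] : Type :=
  {p : Cfg V (Option Empty) C // ∀ u, RN p.1.1 u}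

section
set_option linter.unusedSectionVars false
variable {V V1 V2 C C1 C2 E : Type} [Fintype V] [Fintype V1] [Fintype V2] [Fintype C] [Fintype C1]
  [Fintype C2]

def lift1 (eV : V ≃ V1 ⊕ V2) : V1 ⊕ Option Empty → V ⊕ Option E :=
  Sum.map (fun a => eV.symm (Sum.inl a)) (fun _ => none)

def lift2 (eV : V ≃ V1 ⊕ V2) : V2 ⊕ E → V ⊕ Option E :=
  Sum.map (fun a => eV.symm (Sum.inr a)) some

def gF (eV : V ≃ V1 ⊕ V2) (f1 : V1 → V1 ⊕ Option Empty) (f2 : V2 → V2 ⊕ E) : V → V ⊕ Option E :=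
  fun u => Sum.elim (fun a => lift1 eV (f1 a)) (fun a => lift2 eV (f2 a)) (eV u)

def gS (eV : V ≃ V1 ⊕ V2) (eC : C ≃ C1 ⊕ C2) (s1 : C1 → V1) (s2 : C2 → V2) : C → V :=
  fun c => eV.symm (Sum.map s1 s2 (eC c))

theorem lift1_inj (eV : V ≃ V1 ⊕ V2) : Function.Injective (lift1 (E := E) eV) := by
  rintro (a | (_ | x)) (b | (_ | y)) h
  all_goals first | exact x.elim | exact y.elim | skip
  all_goals simp_all [lift1]

theorem lift2_inj (eV : V ≃ V1 ⊕ V2) : Function.Injective (lift2 (E := E) eV) := by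
  rintro (a | x) (b | y) h <;> simp_all [lift2]

theorem gF_inl (eV : V ≃ V1 ⊕ V2) (f1 : V1 → V1 ⊕ Option Empty) (f2 : V2 → V2 ⊕ E) (a : V1) :
    gF eV f1 f2 (eV.symm (Sum.inl a)) = lift1 eV (f1 a) := by simp [gF]

theorem gF_inr (eV : V ≃ V1 ⊕ V2) (f1 : V1 → V1 ⊕ Option Empty) (f2 : V2 → V2 ⊕ E) (a : V2) :
    gF eV f1 f2 (eV.symm (Sum.inr a)) = lift2 eV (f2 a) := by simp [gF]

def gB (eV : V ≃ V1 ⊕ V2) (B1 : Finset V1) (B2 : Finset V2) : Finset V :=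
  (B1.disjSum B2).map eV.symm.toEmbedding

theorem gB_surj (eV : V ≃ V1 ⊕ V2) (B : Finset V) : ∃ B1 B2, B = gB eV B1 B2 := by
  refine ⟨univ.filter (fun a => eV.symm (Sum.inl a) ∈ B),
    univ.filter (fun a => eV.symm (Sum.inr a) ∈ B), ?_⟩
  ext u
  obtain ⟨x, rfl⟩ := eV.symm.surjective u
  rcases x with a | a <;> simp [gB]

theorem mem_gB_inl (eV : V ≃ V1 ⊕ V2) (B1 : Finset V1) (B2 : Finset V2) (a : V1) :
    eV.symm (Sum.inl a) ∈ gB eV B1 B2 ↔ a ∈ B1 := by simp [gB]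

theorem mem_gB_inr (eV : V ≃ V1 ⊕ V2) (B1 : Finset V1) (B2 : Finset V2) (a : V2) :
    eV.symm (Sum.inr a) ∈ gB eV B1 B2 ↔ a ∈ B2 := by simp [gB]

theorem card_gB (eV : V ≃ V1 ⊕ V2) (B1 : Finset V1) (B2 : Finset V2) :
    (gB eV B1 B2).card = B1.card + B2.card := by simp [gB]

theorem cnt_gB (eV : V ≃ V1 ⊕ V2) (eC : C ≃ C1 ⊕ C2) (s1 : C1 → V1) (s2 : C2 → V2)
    (B1 : Finset V1) (B2 : Finset V2) :
    cnt (gS eV eC s1 s2) (gB eV B1 B2) = cnt s1 B1 + cnt s2 B2 := by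
  unfold cnt
  rw [← eC.symm.sum_comp, Fintype.sum_sum_type]
  simp only [gS, Equiv.apply_symm_apply, Sum.map_inl, Sum.map_inr, mem_gB_inl, mem_gB_inr]

theorem back_gB (eV : V ≃ V1 ⊕ V2) (f1 : V1 → V1 ⊕ Option Empty) (f2 : V2 → V2 ⊕ E)
    (B1 : Finset V1) (B2 : Finset V2) :
    (∀ u w, gF eV f1 f2 u = Sum.inl w → w ∈ gB eV B1 B2 → u ∈ gB eV B1 B2) ↔
    (∀ u w, f1 u = Sum.inl w → w ∈ B1 → u ∈ B1) ∧ (∀ u w, f2 u = Sum.inl w → w ∈ B2 → u ∈ B2) := by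
  constructor
  · intro h
    constructor
    · intro u w hf hw
      rw [← mem_gB_inl eV B1 B2]
      refine h _ (eV.symm (Sum.inl w)) ?_ ((mem_gB_inl _ _ _ _).2 hw)
      rw [gF_inl, hf]; rfl
    · intro u w hf hw
      rw [← mem_gB_inr eV B1 B2]
      refine h _ (eV.symm (Sum.inr w)) ?_ ((mem_gB_inr _ _ _ _).2 hw)
      rw [gF_inr, hf]; rfl
  · rintro ⟨h1, h2⟩ u w hf hw
    obtain ⟨x, rfl⟩ := eV.symm.surjective u
    rcases x with a | a
    · rw [gF_inl] at hf
      rw [mem_gB_inl]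
      rcases hfa : f1 a with b | b
      · rw [hfa] at hf
        simp only [lift1, Sum.map_inl, Sum.inl.injEq] at hf
        subst hf
        exact h1 a b hfa ((mem_gB_inl _ _ _ _).1 hw)
      · rw [hfa] at hf
        simp [lift1] at hf
    · rw [gF_inr] at hf
      rw [mem_gB_inr]
      rcases hfa : f2 a with b | b
      · rw [hfa] at hf
        simp only [lift2, Sum.map_inl, Sum.inl.injEq] at hf
        subst hf
        exact h2 a b hfa ((mem_gB_inr _ _ _ _).1 hw)
      · rw [hfa] at hf
        simp [lift2] at hf

theorem cnt_univ (s : C → V) : cnt s univ = Fintype.card C := by simp [cnt]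

theorem cnt_empty (s : C → V) : cnt s ∅ = 0 := by simp [cnt]

theorem gGood (eV : V ≃ V1 ⊕ V2) (eC : C ≃ C1 ⊕ C2) (f1 : V1 → V1 ⊕ Option Empty)
    (f2 : V2 → V2 ⊕ E) (s1 : C1 → V1) (s2 : C2 → V2) :
    Good (gF eV f1 f2) (gS eV eC s1 s2) ↔ Good f1 s1 ∧ Good f2 s2 := by
  have cV : Fintype.card V = Fintype.card V1 + Fintype.card V2 := by
    rw [Fintype.card_congr eV, Fintype.card_sum]
  have cC : Fintype.card C = Fintype.card C1 + Fintype.card C2 := by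
    rw [Fintype.card_congr eC, Fintype.card_sum]
  unfold Good
  constructor
  · rintro ⟨h1, h2⟩
    have k1 : ∀ B1 : Finset V1, (∀ u w, f1 u = Sum.inl w → w ∈ B1 → u ∈ B1) →
        B1.card ≤ cnt s1 B1 := by
      intro B1 hB
      have := h2 (gB eV B1 ∅) ((back_gB _ _ _ _ _).2 ⟨hB, by simp⟩)
      rwa [card_gB, cnt_gB, cnt_empty] at this
    have k2 : ∀ B2 : Finset V2, (∀ u w, f2 u = Sum.inl w → w ∈ B2 → u ∈ B2) →
        B2.card ≤ cnt s2 B2 := by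
      intro B2 hB
      have := h2 (gB eV ∅ B2) ((back_gB _ _ _ _ _).2 ⟨by simp, hB⟩)
      rw [card_gB, cnt_gB, cnt_empty] at this
      simpa using this
    have l1 := k1 univ (by simp)
    have l2 := k2 univ (by simp)
    rw [cnt_univ, card_univ] at l1 l2
    exact ⟨⟨by omega, k1⟩, ⟨by omega, k2⟩⟩
  · rintro ⟨⟨h1, h2⟩, ⟨h3, h4⟩⟩
    refine ⟨by omega, fun B hB => ?_⟩
    obtain ⟨B1, B2, rfl⟩ := gB_surj eV B
    obtain ⟨b1, b2⟩ := (back_gB _ _ _ _ _).1 hB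
    rw [card_gB, cnt_gB]
    exact add_le_add (h2 _ b1) (h4 _ b2)

theorem gRN_iff (eV : V ≃ V1 ⊕ V2) (f1 : V1 → V1 ⊕ Option Empty) (f2 : V2 → V2 ⊕ E) (u : V) :
    RN (gF eV f1 f2) u ↔ ∃ a, u = eV.symm (Sum.inl a) ∧ RN f1 a := by
  constructor
  · intro h
    induction h with
    | base u h =>
      obtain ⟨x, rfl⟩ := eV.symm.surjective u
      rcases x with a | a
      · refine ⟨a, rfl, .base _ ?_⟩
        rw [gF_inl] at h
        rcases hfa : f1 a with b | (_ | b)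
        · simp [hfa, lift1] at h
        · rfl
        · exact b.elim
      · rw [gF_inr] at h
        rcases hfa : f2 a with b | b <;> simp [hfa, lift2] at h
    | step u w h h' ih =>
      obtain ⟨b, rfl, hb⟩ := ih
      obtain ⟨x, rfl⟩ := eV.symm.surjective u
      rcases x with a | a
      · refine ⟨a, rfl, .step _ b ?_ hb⟩
        rw [gF_inl] at h
        rcases hfa : f1 a with c | c <;> simp [hfa, lift1] at h
        rw [h]
      · rw [gF_inr] at h
        rcases hfa : f2 a with c | c <;> simp [hfa, lift2] at h
  · rintro ⟨a, rfl, h⟩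
    induction h with
    | base a h => exact .base _ (by rw [gF_inl, h]; rfl)
    | step a b h h' ih => exact .step _ _ (by rw [gF_inl, h]; rfl) ih

abbrev Fib (eV : V ≃ V1 ⊕ V2) (eC : C ≃ C1 ⊕ C2) (E : Type) : Type :=
  {p : Cfg V (Option E) C // (∀ u, RN p.1.1 u ↔ (eV u).isLeft) ∧
    (∀ c, RN p.1.1 (p.1.2 c) ↔ (eC c).isLeft)}

def gMap (eV : V ≃ V1 ⊕ V2) (eC : C ≃ C1 ⊕ C2) : TCfg V1 C1 × Cfg V2 E C2 → Fib eV eC E :=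
  fun q => ⟨⟨(gF eV q.1.1.1.1 q.2.1.1, gS eV eC q.1.1.1.2 q.2.1.2),
    (gGood _ _ _ _ _ _).2 ⟨q.1.1.2, q.2.2⟩⟩, by
      have h : ∀ u, RN (gF eV q.1.1.1.1 q.2.1.1) u ↔ (eV u).isLeft := by
        intro u
        rw [gRN_iff]
        obtain ⟨x, rfl⟩ := eV.symm.surjective u
        rcases x with a | a
        · simpa using q.1.2 a
        · simp
      refine ⟨h, fun c => ?_⟩
      rw [h]
      obtain ⟨x, rfl⟩ := eC.symm.surjective c
      rcases x with a | a <;> simp [gS]⟩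

theorem gMap_bij (eV : V ≃ V1 ⊕ V2) (eC : C ≃ C1 ⊕ C2) :
    Function.Bijective (gMap (E := E) eV eC) := by
  constructor
  · rintro ⟨⟨⟨⟨f1, s1⟩, h1⟩, h2⟩, ⟨⟨f2, s2⟩, h3⟩⟩ ⟨⟨⟨⟨f1', s1'⟩, h1'⟩, h2'⟩, ⟨⟨f2', s2'⟩, h3'⟩⟩ he
    simp only [gMap, Subtype.mk.injEq, Prod.mk.injEq] at he
    obtain ⟨hf, hs⟩ := he
    obtain rfl : f1 = f1' := by
      funext a
      have := congrFun hf (eV.symm (Sum.inl a))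
      rw [gF_inl, gF_inl] at this
      exact lift1_inj eV this
    obtain rfl : f2 = f2' := by
      funext a
      have := congrFun hf (eV.symm (Sum.inr a))
      rw [gF_inr, gF_inr] at this
      exact lift2_inj eV this
    obtain rfl : s1 = s1' := by
      funext a
      simpa [gS] using congrFun hs (eC.symm (Sum.inl a))
    obtain rfl : s2 = s2' := by
      funext a
      simpa [gS] using congrFun hs (eC.symm (Sum.inr a))
    rfl
  · rintro ⟨⟨⟨f, s⟩, h⟩, hT, hC⟩
    simp only at hT hC
    have e1 : ∀ a, ∃ y, lift1 eV y = f (eV.symm (Sum.inl a)) := by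
      intro a
      have := (hT (eV.symm (Sum.inl a))).2 (by simp)
      cases this with
      | base _ h => exact ⟨Sum.inr none, by rw [h]; rfl⟩
      | step _ w h h' =>
        rw [hT] at h'
        obtain ⟨b, hb⟩ := Sum.isLeft_iff.1 h'
        exact ⟨Sum.inl b, by rw [h, lift1, Sum.map_inl, ← hb]; simp⟩
    have e2 : ∀ a, ∃ y, lift2 eV y = f (eV.symm (Sum.inr a)) := by
      intro a
      have hn : ¬ RN f (eV.symm (Sum.inr a)) := by rw [hT]; simp
      rcases hfa : f (eV.symm (Sum.inr a)) with w | (_ | x)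
      · have hw : ¬ RN f w := fun h => hn (.step _ _ hfa h)
        rw [hT] at hw
        rcases hb : eV w with b | b
        · simp [hb] at hw
        · exact ⟨Sum.inl b, by rw [lift2, Sum.map_inl, ← hb]; simp⟩
      · exact absurd (.base _ hfa) hn
      · exact ⟨Sum.inr x, rfl⟩
    have e3 : ∀ c, ∃ y, eV.symm (Sum.inl y) = s (eC.symm (Sum.inl c)) := by
      intro c
      have := (hC (eC.symm (Sum.inl c))).2 (by simp)
      rw [hT] at this
      obtain ⟨b, hb⟩ := Sum.isLeft_iff.1 this
      exact ⟨b, by rw [← hb]; simp⟩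
    have e4 : ∀ c, ∃ y, eV.symm (Sum.inr y) = s (eC.symm (Sum.inr c)) := by
      intro c
      have : ¬ RN f (s (eC.symm (Sum.inr c))) := by rw [hC]; simp
      rw [hT] at this
      rcases hb : eV (s (eC.symm (Sum.inr c))) with b | b
      · simp [hb] at this
      · exact ⟨b, by rw [← hb]; simp⟩
    choose f1 hf1 using e1
    choose f2 hf2 using e2
    choose s1 hs1 using e3
    choose s2 hs2 using e4
    obtain rfl : gF eV f1 f2 = f := by
      funext u
      obtain ⟨x, rfl⟩ := eV.symm.surjective u
      rcases x with a | a
      · rw [gF_inl, hf1]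
      · rw [gF_inr, hf2]
    obtain rfl : gS eV eC s1 s2 = s := by
      funext c
      obtain ⟨x, rfl⟩ := eC.symm.surjective c
      rcases x with a | a
      · simp [gS, hs1]
      · simp [gS, hs2]
    obtain ⟨g1, g2⟩ := (gGood _ _ _ _ _ _).1 h
    refine ⟨⟨⟨⟨(f1, s1), g1⟩, fun a => ?_⟩, ⟨(f2, s2), g2⟩⟩, rfl⟩
    have := (hT (eV.symm (Sum.inl a))).2 (by simp)
    rw [gRN_iff] at this
    obtain ⟨b, hb, h'⟩ := this
    have : a = b := by simpa using hb
    exact this ▸ h'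

theorem fib_card (eV : V ≃ V1 ⊕ V2) (eC : C ≃ C1 ⊕ C2) :
    Nat.card (Fib eV eC E) = Nat.card (TCfg V1 C1) * Nat.card (Cfg V2 E C2) := by
  rw [← Nat.card_eq_of_bijective _ (gMap_bij (E := E) eV eC), Nat.card_prod]

end

theorem exists_split {A X Y : Type} [Fintype A] [Fintype X] [Fintype Y] (T : Finset A)
    (h1 : T.card = Fintype.card X) (h2 : Fintype.card A = Fintype.card X + Fintype.card Y) :
    ∃ e : A ≃ X ⊕ Y, ∀ a, a ∈ T ↔ (e a).isLeft := by
  have c1 : Fintype.card {a // a ∈ T} = Fintype.card X := by simpa using h1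
  have c2 : Fintype.card {a // a ∉ T} = Fintype.card Y := by
    rw [Fintype.card_subtype_compl]
    simp
    omega
  refine ⟨(Equiv.sumCompl (· ∈ T)).symm.trans
    (Equiv.sumCongr (Fintype.equivOfCardEq c1) (Fintype.equivOfCardEq c2)), fun a => ?_⟩
  by_cases h : a ∈ T
  · simp [h, Equiv.sumCompl_symm_apply_of_pos]
  · simp [h, Equiv.sumCompl_symm_apply_of_neg]

noncomputable def NN (m : ℕ) (E : Type) : ℕ := Nat.card (Cfg (Fin m) E (Fin m))
noncomputable def hh (m : ℕ) : ℕ := Nat.card (TCfg (Fin m) (Fin m))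

theorem fib_card' {m : ℕ} (E : Type) (T C1 : Finset (Fin m)) :
    Nat.card {p : Cfg (Fin m) (Option E) (Fin m) // predF p.1.1 = T ∧
      univ.filter (fun c => RN p.1.1 (p.1.2 c)) = C1} =
      if C1.card = T.card then hh T.card * NN (m - T.card) E else 0 := by
  have hT : T.card ≤ m := by simpa using card_le_univ T
  have hC : C1.card ≤ m := by simpa using card_le_univ C1
  obtain ⟨eV, hV⟩ := exists_split (X := Fin T.card) (Y := Fin (m - T.card)) T (by simp) (by simp; omega)
  obtain ⟨eC, hC⟩ := exists_split (X := Fin C1.card) (Y := Fin (m - C1.card)) C1 (by simp)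
    (by simp; omega)
  have e : {p : Cfg (Fin m) (Option E) (Fin m) // predF p.1.1 = T ∧
      univ.filter (fun c => RN p.1.1 (p.1.2 c)) = C1} ≃ Fib eV eC E :=
    Equiv.subtypeEquivRight (by
      intro p
      simp only [predF, Finset.ext_iff, mem_filter, mem_univ, true_and, hV, hC])
  rw [Nat.card_congr e, fib_card]
  split_ifs with h
  · rw [h]; rfl
  · have : IsEmpty (TCfg (Fin T.card) (Fin C1.card)) := ⟨fun p => h (by simpa using p.1.2.1)⟩
    simp

theorem decomp (m : ℕ) (E : Type) [Fintype E] (φ : ℕ → ℕ) :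
    ∑ p : Cfg (Fin m) (Option E) (Fin m), φ (predF p.1.1).card =
      ∑ r ∈ range (m + 1), (m.choose r) ^ 2 * (φ r * hh r * NN (m - r) E) := by
  have e1 : ∑ p : Cfg (Fin m) (Option E) (Fin m), φ (predF p.1.1).card =
      ∑ T : Finset (Fin m), ∑ C1 : Finset (Fin m), φ T.card *
        Nat.card {p : Cfg (Fin m) (Option E) (Fin m) // predF p.1.1 = T ∧
          univ.filter (fun c => RN p.1.1 (p.1.2 c)) = C1} := by
    rw [← Fintype.sum_prod_type']
    rw [← sum_fiberwise univ (fun p : Cfg (Fin m) (Option E) (Fin m) =>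
      (predF p.1.1, univ.filter (fun c => RN p.1.1 (p.1.2 c))))]
    refine sum_congr rfl fun q _ => ?_
    rw [Nat.card_eq_fintype_card, Fintype.card_subtype, mul_comm, ← smul_eq_mul, ← sum_const]
    simp only [Prod.ext_iff]
    refine sum_congr rfl fun p hp => ?_
    rw [(mem_filter.1 hp).2.1]
  rw [e1]
  simp only [fib_card']
  have e2 : ∀ T : Finset (Fin m), ∑ C1 : Finset (Fin m), φ T.card *
      (if C1.card = T.card then hh T.card * NN (m - T.card) E else 0) =
      m.choose T.card * (φ T.card * hh T.card * NN (m - T.card) E) := by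
    intro T
    rw [← mul_sum, ← sum_filter, sum_const]
    have : (univ.filter (fun C1 : Finset (Fin m) => C1.card = T.card)).card = m.choose T.card := by
      rw [univ_filter_card_eq, card_powersetCard]; simp
    rw [this, smul_eq_mul]; ring
  simp only [e2]
  rw [← powerset_univ, sum_powerset_apply_card
    (fun r => m.choose r * (φ r * hh r * NN (m - r) E))]
  simp only [card_univ, Fintype.card_fin, smul_eq_mul]
  refine sum_congr rfl fun r _ => by ring

theorem NN_option (m : ℕ) (E : Type) [Fintype E] :
    NN m (Option E) = ∑ r ∈ range (m + 1), (m.choose r) ^ 2 * (hh r * NN (m - r) E) := by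
  have := decomp m E (fun _ => 1)
  simp only [one_mul] at this
  rw [← this]
  simp [NN]

theorem map_emb {A V E : Type} [Fintype V] (e : A ≃ V ⊕ E) (O : Finset A)
    (h : ∀ a, a ∈ O ↔ (e a).isLeft) : univ.map (emb e) = O := by
  ext a
  rw [h]
  obtain ⟨x, rfl⟩ := e.symm.surjective a
  rcases x with a | a <;> simp [emb_apply]

theorem good_count {n m : ℕ} (E : Type) [Fintype E] (O : Finset (Fin n)) (hO : O.card = m)
    (hE : n = m + Fintype.card E) :
    Nat.card {p : (Fin n → Fin n) × (Fin m → Fin n) // GoodOn p.1 O p.2} =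
      n ^ Fintype.card E * NN m E := by
  obtain ⟨e, he⟩ := exists_split (X := Fin m) (Y := E) O (by simpa using hO) (by simpa using hE)
  have := bridge_card (C := Fin m) e
  rw [map_emb e O he] at this
  rw [this]
  simp [NN]

theorem good_reach_count {n m : ℕ} (E : Type) [Fintype E] (O : Finset (Fin n)) (hO : O.card = m)
    (v : Fin n) (hv : v ∉ O) (hE : n = m + (Fintype.card E + 1)) :
    Nat.card {p : ((Fin n → Fin n) × (Fin m → Fin n)) × Fin n //
        GoodOn p.1.1 O p.1.2 ∧ Reach p.1.1 O p.2 v} =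
      n ^ (Fintype.card E + 1) *
        ∑ r ∈ range (m + 1), (m.choose r) ^ 2 * ((r + 1) * hh r * NN (m - r) E) := by
  obtain ⟨e0, he⟩ := exists_split (X := Fin m) (Y := Option E) O (by simpa using hO)
    (by simpa using hE)
  obtain ⟨y, hy⟩ : ∃ y, e0 v = Sum.inr y := by
    rw [he] at hv
    rcases h : e0 v with a | a
    · simp [h] at hv
    · exact ⟨a, rfl⟩
  let e : Fin n ≃ Fin m ⊕ Option E := e0.trans (Equiv.sumCongr (Equiv.refl _) (Equiv.swap y none))
  have he' : ∀ a, a ∈ O ↔ (e a).isLeft := by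
    intro a; rw [he]
    rcases h : e0 a with b | b
    · simp only [e, Equiv.trans_apply, h, Equiv.sumCongr_apply, Sum.map_inl, Sum.isLeft_inl]
    · simp only [e, Equiv.trans_apply, h, Equiv.sumCongr_apply, Sum.map_inr, Sum.isLeft_inr]
  have hev : e.symm (Sum.inr none) = v := by
    rw [Equiv.symm_apply_eq]
    simp [e, hy]
  have := bridge_reach_card (C := Fin m) e
  rw [map_emb e O he', hev] at this
  rw [this, Fintype.card_fin, ← decomp m E (fun r => r + 1)]
  congr!

theorem NN_succ (m : ℕ) (E : Type) [Fintype E] :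
    NN (m + 1) E = (m + 1) * (m + 1 + Fintype.card E) *
      ∑ r ∈ range (m + 1), (m.choose r) ^ 2 * ((r + 1) * hh r * NN (m - r) E) := by
  obtain ⟨n, hn⟩ : ∃ n, n = m + 1 + Fintype.card E := ⟨_, rfl⟩
  obtain ⟨O, -, hO⟩ := exists_subset_card_eq (s := (univ : Finset (Fin n))) (n := m + 1)
    (by simp; omega)
  have h1 := good_count E O hO hn
  rw [good_card_filter, sum_congr rfl (fun v hv => good_reach_count E (O.erase v)
    (by rw [card_erase_of_mem hv, hO]; rfl) v (by simp) (by omega)), sum_const, hO] at h1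
  have hpos : 0 < n ^ Fintype.card E := by
    apply pow_pos; omega
  apply Nat.eq_of_mul_eq_mul_left hpos
  rw [← h1, ← hn, smul_eq_mul, pow_succ]
  ring

theorem mcount_NN (m : ℕ) (E : Type) [Fintype E] :
    MCount (m + Fintype.card E) m =
      (m + Fintype.card E).choose m * ((m + Fintype.card E) ^ Fintype.card E * NN m E) := by
  rw [mcount_eq, sum_congr rfl (fun O hO => good_count E O (mem_powersetCard.1 hO).2 rfl),
    sum_const, card_powersetCard]
  simp

theorem NN_zero (E : Type) : NN 0 E = 1 := by
  unfold NN
  have : Unique (Cfg (Fin 0) E (Fin 0)) :=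
    ⟨⟨⟨(fun a => a.elim0, fun a => a.elim0), by
      refine ⟨rfl, fun B _ => ?_⟩
      rw [Finset.eq_empty_of_isEmpty B]; simp⟩⟩, fun p => Subsingleton.elim _ _⟩
  simp

end LP

namespace LP
open Finset

noncomputable def SS (E : Type) : PowerSeries ℚ :=
  PowerSeries.mk fun m => (NN m E : ℚ) / (m.factorial : ℚ) ^ 2

noncomputable def HH : PowerSeries ℚ := PowerSeries.mk fun m => (hh m : ℚ) / (m.factorial : ℚ) ^ 2

noncomputable def KK : PowerSeries ℚ :=
  PowerSeries.mk fun m => ((m : ℚ) + 1) * ((hh m : ℚ) / (m.factorial : ℚ) ^ 2)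

theorem choose_fact {m r : ℕ} (h : r ≤ m) : (m.choose r : ℚ) / (m.factorial : ℚ) =
    1 / (r.factorial : ℚ) * (1 / ((m - r).factorial : ℚ)) := by
  rw [Nat.cast_choose ℚ h]
  have := Nat.factorial_ne_zero m
  field_simp

theorem SS_option (E : Type) [Fintype E] : SS (Option E) = HH * SS E := by
  ext m
  simp only [SS, HH, PowerSeries.coeff_mk, PowerSeries.coeff_mul, NN_option]
  rw [Finset.Nat.sum_antidiagonal_eq_sum_range_succ (f := fun i j =>
    (hh i : ℚ) / (i.factorial : ℚ) ^ 2 * ((NN j E : ℚ) / (j.factorial : ℚ) ^ 2))]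
  push_cast
  rw [sum_div]
  refine sum_congr rfl fun r hr => ?_
  have := choose_fact (m := m) (r := r) (by simpa [Nat.lt_succ_iff] using hr)
  rw [show (m.choose r : ℚ) ^ 2 * ((hh r : ℚ) * (NN (m - r) E : ℚ)) / (m.factorial : ℚ) ^ 2 =
    ((m.choose r : ℚ) / (m.factorial : ℚ)) ^ 2 * ((hh r : ℚ) * (NN (m - r) E : ℚ)) by ring, this]
  ring

theorem SS_succ (E : Type) [Fintype E] (m : ℕ) :
    ((m : ℚ) + 1) * PowerSeries.coeff (m + 1) (SS E) =
      ((m : ℚ) + 1 + Fintype.card E) * PowerSeries.coeff m (KK * SS E) := by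
  simp only [SS, KK, PowerSeries.coeff_mk, PowerSeries.coeff_mul, NN_succ]
  rw [Finset.Nat.sum_antidiagonal_eq_sum_range_succ (f := fun i j =>
    ((i : ℚ) + 1) * ((hh i : ℚ) / (i.factorial : ℚ) ^ 2) *
      ((NN j E : ℚ) / (j.factorial : ℚ) ^ 2))]
  push_cast [Nat.factorial_succ]
  have : ∑ r ∈ range (m+1), ((r : ℚ) + 1) * ((hh r : ℚ) / (r.factorial : ℚ) ^ 2) *
      ((NN (m - r) E : ℚ) / ((m - r).factorial : ℚ) ^ 2) =
      (∑ r ∈ range (m+1), (m.choose r : ℚ) ^ 2 * (((r : ℚ) + 1) * (hh r : ℚ) * (NN (m - r) E : ℚ))) /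
        (m.factorial : ℚ) ^ 2 := by
    rw [sum_div]
    refine sum_congr rfl fun r hr => ?_
    have := choose_fact (m := m) (r := r) (by simpa [Nat.lt_succ_iff] using hr)
    rw [show (m.choose r : ℚ) ^ 2 * (((r : ℚ) + 1) * (hh r : ℚ) * (NN (m - r) E : ℚ)) /
      (m.factorial : ℚ) ^ 2 = ((m.choose r : ℚ) / (m.factorial : ℚ)) ^ 2 *
        (((r : ℚ) + 1) * (hh r : ℚ) * (NN (m - r) E : ℚ)) by ring, this]
    ring
  rw [this]
  have := Nat.factorial_ne_zero m
  have h2 : (m : ℚ) + 1 ≠ 0 := by positivity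
  field_simp

theorem hh_zero : hh 0 = 1 := by
  have := NN_option 0 Empty
  simpa [NN_zero] using this.symm

noncomputable def MM : PowerSeries ℚ := SS Empty
noncomputable def WW : PowerSeries ℚ := PowerSeries.X * KK

theorem MM_zero : PowerSeries.coeff 0 MM = 1 := by simp [MM, SS, NN_zero]

theorem MM_eq : MM = 1 + WW * MM := by
  ext m
  cases m with
  | zero => rw [MM_zero]; simp [WW]
  | succ m =>
    have := SS_succ Empty m
    have h2 : (m : ℚ) + 1 ≠ 0 := by positivity
    simp only [Fintype.card_empty, Nat.cast_zero, add_zero] at this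
    have := mul_left_cancel₀ h2 this
    rw [WW, mul_assoc, map_add, PowerSeries.coeff_succ_X_mul]
    simpa [MM, PowerSeries.coeff_one] using this

theorem KK_eq : KK = HH * MM := by
  ext m
  cases m with
  | zero =>
    rw [PowerSeries.coeff_mul]
    simp only [Finset.Nat.antidiagonal_zero, sum_singleton, MM_zero]
    simp [KK, HH]
  | succ m =>
    have h := SS_succ (Option Empty) m
    rw [SS_option, show SS Empty = MM from rfl] at h
    have e : PowerSeries.X * (KK * (HH * MM)) = HH * MM - HH := by
      have := MM_eq
      rw [WW] at this
      linear_combination (-HH) * this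
    rw [← PowerSeries.coeff_succ_X_mul m (KK * (HH * MM)), e, map_sub] at h
    simp only [Fintype.card_option, Fintype.card_empty] at h
    have hk : PowerSeries.coeff (m+1) KK = ((m : ℚ) + 2) * PowerSeries.coeff (m+1) HH := by
      simp only [KK, HH, PowerSeries.coeff_mk]; push_cast; ring
    rw [hk]
    push_cast at h
    linear_combination h

theorem XH_eq : PowerSeries.X * HH = WW * (1 - WW) := by
  have h1 := MM_eq
  have h2 := KK_eq
  have : WW = PowerSeries.X * HH * MM := by rw [WW, h2, mul_assoc]
  linear_combination (-(PowerSeries.X * HH)) * h1 - (1 - WW) * this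

theorem MG (k : ℕ) : PowerSeries.X ^ k * (HH ^ k * MM) = WW ^ k * (MM * (1 - WW) ^ k) := by
  have : PowerSeries.X ^ k * HH ^ k = WW ^ k * (1 - WW) ^ k := by
    rw [← mul_pow, XH_eq, mul_pow]
  linear_combination MM * this

theorem W_ode : WW = PowerSeries.X * PowerSeries.derivative ℚ (WW - WW ^ 2) := by
  have : WW - WW ^ 2 = PowerSeries.X * HH := by rw [XH_eq]; ring
  rw [this, WW]
  congr 1
  ext m
  rw [PowerSeries.coeff_derivative, PowerSeries.coeff_succ_X_mul]
  simp only [KK, HH, PowerSeries.coeff_mk]; ring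

theorem coeff_X_mul_deriv (n : ℕ) (P : PowerSeries ℚ) :
    PowerSeries.coeff n (PowerSeries.X * PowerSeries.derivative ℚ P) =
      n * PowerSeries.coeff n P := by
  cases n with
  | zero => simp
  | succ n => rw [PowerSeries.coeff_succ_X_mul, PowerSeries.coeff_derivative]; push_cast; ring

theorem W_rec (n j : ℕ) (hj : 1 ≤ j) : ((j : ℚ) + 1) * ((n : ℚ) - j) * PowerSeries.coeff n (WW ^ j) =
    2 * j * n * PowerSeries.coeff n (WW ^ (j + 1)) := by
  obtain ⟨i, rfl⟩ : ∃ i, j = i + 1 := ⟨j - 1, by omega⟩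
  have h := W_ode
  have d : ∀ e : ℕ, PowerSeries.derivative ℚ (WW ^ (e + 1)) =
      (e + 1 : ℚ) • (WW ^ e * PowerSeries.derivative ℚ WW) := by
    intro e
    rw [Derivation.leibniz_pow]
    simp only [Nat.add_sub_cancel, smul_eq_mul]
    rw [← Nat.cast_smul_eq_nsmul ℚ]
    push_cast
    rfl
  have key : (((i : ℚ) + 1) * (i + 2)) • WW ^ (i + 1) =
      ((i : ℚ) + 2) • (PowerSeries.X * PowerSeries.derivative ℚ (WW ^ (i + 1))) -
      (2 * ((i : ℚ) + 1)) • (PowerSeries.X * PowerSeries.derivative ℚ (WW ^ (i + 2))) := by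
    rw [d i, d (i + 1)]
    rw [map_sub, show (2 : ℕ) = 1 + 1 from rfl, d 1] at h
    simp only [PowerSeries.smul_eq_C_mul] at h ⊢
    push_cast at h ⊢
    simp only [map_mul, map_add, map_one, map_natCast, map_ofNat] at h ⊢
    rw [pow_one] at h
    linear_combination (((i : PowerSeries ℚ) + 1) * (i + 2) * WW ^ i) * h
  have := congrArg (PowerSeries.coeff n) key
  rw [map_sub] at this
  simp only [map_smul, smul_eq_mul, coeff_X_mul_deriv] at this
  push_cast
  linear_combination -this

theorem W_coeff_diag (n : ℕ) : PowerSeries.coeff n (WW ^ n) = 1 := by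
  rw [WW, mul_pow, ← Nat.zero_add n, Nat.zero_add n]
  have := PowerSeries.coeff_X_pow_mul (KK ^ n) n 0
  rw [Nat.zero_add] at this
  rw [this]
  simp [KK, hh_zero]

theorem W_coeff_big (n : ℕ) (R : PowerSeries ℚ) : PowerSeries.coeff n (WW ^ (n + 1) * R) = 0 := by
  rw [WW, mul_pow, mul_assoc, PowerSeries.coeff_X_pow_mul']
  simp

theorem W_coeff (n d : ℕ) (hd : d ≤ n) (hn : 1 ≤ n) : (n : ℚ) * PowerSeries.coeff n (WW ^ (n - d)) =
    ((n : ℚ) - d) * (2 * n) ^ d / (d.factorial : ℚ) := by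
  induction d with
  | zero => simp [W_coeff_diag]
  | succ d ih =>
    have ih := ih (by omega)
    obtain ⟨j, hj⟩ : ∃ j, n = d + 1 + j := ⟨n - (d+1), by omega⟩
    rw [show n - d = j + 1 by omega] at ih
    rw [show n - (d+1) = j by omega]
    have hnq : (n : ℚ) = d + 1 + j := by rw [hj]; push_cast; ring
    rcases Nat.eq_zero_or_pos j with h0 | h0
    · subst h0
      rw [pow_zero, PowerSeries.coeff_one, if_neg (by omega)]
      simp [hnq]
    · have r := W_rec n j h0
      have hd1 : (n : ℚ) - j = d + 1 := by rw [hnq]; ring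
      have hd2 : (n : ℚ) - d = j + 1 := by rw [hnq]; ring
      have hd3 : (n : ℚ) - ((d + 1 : ℕ) : ℚ) = j := by rw [hnq]; push_cast; ring
      rw [hd1] at r
      rw [hd2] at ih
      rw [hd3, Nat.factorial_succ]
      have hf : (d.factorial : ℚ) ≠ 0 := by positivity
      have h1 : (j : ℚ) + 1 ≠ 0 := by positivity
      have h2 : (d : ℚ) + 1 ≠ 0 := by positivity
      push_cast
      rw [eq_div_iff hf] at ih
      rw [eq_div_iff (mul_ne_zero h2 hf)]
      apply mul_left_cancel₀ h1
      linear_combination (n : ℚ) * d.factorial * r + 2 * j * n * ih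

theorem gc_pascal (a : ℤ) (b : ℕ) :
    genChoose (a + 1) (b + 1) = genChoose a (b + 1) + genChoose a b := by
  unfold genChoose
  rw [prod_range_succ', prod_range_succ (fun i : ℕ => (a : ℚ) - i), Nat.factorial_succ]
  have : ∀ i : ℕ, ((a + 1 : ℤ) : ℚ) - ((i + 1 : ℕ) : ℚ) = a - i := by intro i; push_cast; ring
  simp only [this]
  have hf : (b.factorial : ℚ) ≠ 0 := by positivity
  have h2 : (b : ℚ) + 1 ≠ 0 := by positivity
  push_cast
  field_simp
  ring

theorem gc_self (i : ℕ) : genChoose i i = 1 := by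
  induction i with
  | zero => simp [genChoose]
  | succ i ih =>
    push_cast
    rw [gc_pascal, ih]
    simp [genChoose, prod_range_succ]

noncomputable def qq (k i : ℕ) : ℚ := genChoose ((i : ℤ) - k) i

theorem qq_zero (i : ℕ) : qq 0 i = 1 := by simp [qq, gc_self]

theorem qq_zero' (k : ℕ) : qq k 0 = 1 := by simp [qq, genChoose]

theorem qq_succ (k i : ℕ) : qq (k + 1) (i + 1) = qq k (i + 1) - qq k i := by
  have := gc_pascal ((i : ℤ) - k) i
  unfold qq
  rw [show (((i + 1 : ℕ) : ℤ) - (k : ℤ)) = (i : ℤ) - k + 1 by push_cast; ring, this]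
  rw [show (((i + 1 : ℕ) : ℤ) - ((k + 1 : ℕ) : ℤ)) = (i : ℤ) - k by push_cast; ring]
  ring

theorem expand (k N : ℕ) : ∃ R : PowerSeries ℚ, MM * (1 - WW) ^ k =
    ∑ i ∈ range (N + 1), PowerSeries.C (qq k i) * WW ^ i + WW ^ (N + 1) * R := by
  induction k with
  | zero =>
    refine ⟨MM, ?_⟩
    simp only [qq_zero, map_one, one_mul, pow_zero, mul_one]
    induction N with
    | zero => simpa using MM_eq
    | succ N ih =>
      rw [sum_range_succ]
      have h := MM_eq
      linear_combination ih + WW ^ (N + 1) * h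
  | succ k ih =>
    obtain ⟨R, hR⟩ := ih
    refine ⟨R * (1 - WW) - PowerSeries.C (qq k N), ?_⟩
    rw [pow_succ, ← mul_assoc, hR]
    have : ∀ N : ℕ, (∑ i ∈ range (N + 1), PowerSeries.C (qq k i) * WW ^ i) * (1 - WW) =
        ∑ i ∈ range (N + 1), PowerSeries.C (qq (k + 1) i) * WW ^ i -
          PowerSeries.C (qq k N) * WW ^ (N + 1) := by
      intro N
      induction N with
      | zero => simp [qq_zero']
      | succ N ih =>
        rw [sum_range_succ, add_mul, ih, sum_range_succ _ (N + 1), qq_succ, map_sub]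
        ring
    rw [add_mul, this]
    ring

theorem exists_E (k : ℕ) : ∃ (E : Type) (_ : Fintype E), Fintype.card E = k ∧
    SS E = HH ^ k * MM := by
  induction k with
  | zero => exact ⟨Empty, inferInstance, by simp, by simp [MM]⟩
  | succ k ih =>
    obtain ⟨E, _, h1, h2⟩ := ih
    refine ⟨Option E, inferInstance, by simp [h1], ?_⟩
    rw [SS_option, h2]; ring

theorem coeff_final (k m : ℕ) (hn : 1 ≤ m + k) :
    ((m + k : ℕ) : ℚ) * PowerSeries.coeff m (HH ^ k * MM) =
      ∑ j ∈ range (m + 1), genChoose (2 * (m : ℤ) - ((m + k : ℕ) : ℤ) - (j : ℤ)) (m - j) *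
        (((m + k : ℕ) : ℚ) - (j : ℚ)) * (2 * ((m + k : ℕ) : ℚ)) ^ j / (Nat.factorial j : ℚ) := by
  rw [← PowerSeries.coeff_X_pow_mul _ k m, MG]
  obtain ⟨R, hR⟩ := expand k m
  rw [hR, mul_add, map_add, ← mul_assoc, ← pow_add, show k + (m + 1) = (m + k) + 1 by ring,
    W_coeff_big, add_zero, mul_sum, map_sum, mul_sum, ← sum_range_reflect]
  refine sum_congr rfl fun j hj => ?_
  have hj : j ≤ m := by simpa [Nat.lt_succ_iff] using hj
  rw [show m + 1 - 1 - j = m - j by omega]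
  have := W_coeff (m + k) j (by omega) hn
  rw [show WW ^ k * (PowerSeries.C (qq k (m - j)) * WW ^ (m - j)) =
    PowerSeries.C (qq k (m - j)) * WW ^ (m + k - j) by
      rw [show m + k - j = k + (m - j) by omega, pow_add]; ring, PowerSeries.coeff_C_mul]
  have hq : qq k (m - j) = genChoose (2 * (m : ℤ) - ((m + k : ℕ) : ℤ) - (j : ℤ)) (m - j) := by
    unfold qq
    congr 1
    push_cast [Nat.cast_sub hj]
    ring
  rw [← hq]
  linear_combination qq k (m - j) * this

end LP

/-- (Lackner–Panholzer, Theorem 4.5) For all `n ≥ 1` and `0 ≤ m ≤ n`,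
`M_{n,m} = ((n-1)! m! n^(n-m) / (n-m)!) Σ_{j=0}^{m} binom(2m-n-j, m-j) (n-j)(2n)^j / j!`,
as an identity of rational numbers (with generalized binomial coefficients). -/
theorem lackner_panholzer_theorem_4_5 (n m : ℕ) (hn : 1 ≤ n) (hm : m ≤ n) :
    (MCount n m : ℚ) =
      (Nat.factorial (n - 1) : ℚ) * (Nat.factorial m : ℚ) * (n : ℚ) ^ (n - m) /
          (Nat.factorial (n - m) : ℚ) *
        ∑ j ∈ Finset.range (m + 1),
          genChoose (2 * (m : ℤ) - (n : ℤ) - (j : ℤ)) (m - j) * ((n : ℚ) - (j : ℚ)) *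
              (2 * (n : ℚ)) ^ j / (Nat.factorial j : ℚ) := by
  obtain ⟨k, rfl⟩ : ∃ k, n = m + k := ⟨n - m, by omega⟩
  obtain ⟨E, _, rfl, hE⟩ := LP.exists_E k
  have h := LP.coeff_final (Fintype.card E) m hn
  rw [← h, ← hE, LP.mcount_NN, LP.SS, PowerSeries.coeff_mk, Nat.add_sub_cancel_left]
  push_cast
  rw [Nat.cast_choose ℚ (Nat.le_add_right m (Fintype.card E)), Nat.add_sub_cancel_left,
    ← Nat.mul_factorial_pred (show m + Fintype.card E ≠ 0 by omega)]
  have h1 : (m.factorial : ℚ) ≠ 0 := by positivity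
  push_cast
  field_simp
end

section
/- (Lackner–Panholzer, Corollary 4.6) For all n ≥ 1 and 0 ≤ m ≤ n, the total number F_{n,m} of (n,m)-tree parking functions equals F_{n,m} = ((n−1)!·m!·n^(n−m−1)/(n−m)!) · Σ_{j=0}^{m} binomial(2m−n−j, m−j) · (n−j)·(2n)^j / j!, where binomial(a,b) for integer a (possibly negative) and nonnegative integer b denotes the generalized binomial coefficient a(a−1)⋯(a−b+1)/b!, and the identity is an identity of rational numbers. -/
open Classical in
/-- first unoccupied vertex on the route of `v` -/
noncomputable def firstFree {n : ℕ} (f : Fin n → Fin n) (O : Finset (Fin n)) (v : Fin n) :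
    Option (Fin n) :=
  if h : ∃ k, f^[k] v ∉ O then some (f^[Nat.find h] v) else none

theorem ff_none {n : ℕ} {f : Fin n → Fin n} {O : Finset (Fin n)} {v : Fin n} :
    firstFree f O v = none ↔ ∀ k, f^[k] v ∈ O := by
  unfold firstFree
  split_ifs with h
  · simp only [reduceCtorEq, false_iff]; push Not; exact h
  · simp only [true_iff]; push Not at h; exact h

theorem ff_some {n : ℕ} {f : Fin n → Fin n} {O : Finset (Fin n)} {v u : Fin n} :
    firstFree f O v = some u ↔ ∃ k, f^[k] v = u ∧ u ∉ O ∧ ∀ i < k, f^[i] v ∈ O := by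
  classical
  unfold firstFree
  split_ifs with h
  · simp only [Option.some.injEq]
    constructor
    · rintro rfl
      exact ⟨Nat.find h, by congr!, by have := Nat.find_spec h; convert this, fun i hi => by
        have := Nat.find_min h (m := i) (by convert hi); simpa using this⟩
    · rintro ⟨k, rfl, h1, h2⟩
      have : Nat.find h = k := by
        rw [Nat.find_eq_iff]
        exact ⟨h1, fun i hi => by simpa using h2 i hi⟩
      rw [← this]
  · simp only [reduceCtorEq, false_iff]
    rintro ⟨k, rfl, h1, h2⟩
    exact h ⟨k, h1⟩

theorem ff_not_mem {n : ℕ} {f : Fin n → Fin n} {O : Finset (Fin n)} {v : Fin n} (h : v ∉ O) :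
    firstFree f O v = some v := ff_some.2 ⟨0, rfl, h, by simp⟩

theorem ff_mem {n : ℕ} {f : Fin n → Fin n} {O : Finset (Fin n)} {v : Fin n} (h : v ∈ O) :
    firstFree f O v = firstFree f O (f v) := by
  rcases hx : firstFree f O (f v) with _ | u
  · rw [ff_none] at hx ⊢
    rintro (_ | k)
    · exact h
    · exact hx k
  · rw [ff_some] at hx ⊢
    obtain ⟨k, h1, h2, h3⟩ := hx
    refine ⟨k + 1, h1, h2, ?_⟩
    rintro (_ | i) hi
    · exact h
    · exact h3 i (by omega)

theorem ff_iter {n : ℕ} {f : Fin n → Fin n} {O : Finset (Fin n)} {v : Fin n} (k : ℕ)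
    (h : ∀ i < k, f^[i] v ∈ O) :
    firstFree f O v = firstFree f O (f^[k] v) := by
  induction k with
  | zero => rfl
  | succ k ih =>
    rw [ih (fun i hi => h i (by omega)), ff_mem (h k (by omega)), Function.iterate_succ_apply']

theorem iter_congr {n : ℕ} {f g : Fin n → Fin n} {O : Finset (Fin n)}
    (hfg : ∀ v ∈ O, f v = g v) {v : Fin n} (k : ℕ) (h : ∀ i < k, f^[i] v ∈ O) :
    g^[k] v = f^[k] v := by
  induction k with
  | zero => rfl
  | succ k ih =>
    rw [Function.iterate_succ_apply', Function.iterate_succ_apply', ih (fun i hi => h i (by omega)),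
      hfg _ (h k (by omega))]

theorem ff_congr {n : ℕ} {f g : Fin n → Fin n} {O : Finset (Fin n)}
    (hfg : ∀ v ∈ O, f v = g v) : firstFree f O = firstFree g O := by
  funext v
  symm
  rcases hx : firstFree f O v with _ | u
  · rw [ff_none] at hx ⊢
    intro k
    rw [iter_congr hfg k (fun i _ => hx i)]; exact hx k
  · rw [ff_some] at hx ⊢
    obtain ⟨k, h1, h2, h3⟩ := hx
    refine ⟨k, by rw [iter_congr hfg k h3, h1], h2, fun i hi => ?_⟩
    rw [iter_congr hfg i (fun j hj => h3 j (by omega))]; exact h3 i hi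

/-- transition of the component structure -/
def pstep {n : ℕ} (ψ : Fin n → Option (Fin n)) (u w : Fin n) : Fin n → Option (Fin n) :=
  fun v => if ψ v = some u then (if ψ w = some u then none else ψ w) else ψ v

theorem ff_step {n : ℕ} {f : Fin n → Fin n} {O : Finset (Fin n)} {u : Fin n} (hu : u ∉ O) :
    firstFree f (insert u O) = pstep (firstFree f O) u (f u) := by
  have key : ∀ v, firstFree f O v ≠ some u → firstFree f (insert u O) v = firstFree f O v := by
    intro v hv
    rcases hx : firstFree f O v with _ | u'
    · rw [ff_none] at hx ⊢
      intro k; exact Finset.mem_insert_of_mem (hx k)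
    · have hne : u' ≠ u := by rintro rfl; exact hv hx
      rw [ff_some] at hx ⊢
      obtain ⟨k, h1, h2, h3⟩ := hx
      exact ⟨k, h1, by simp [hne, h2], fun i hi => Finset.mem_insert_of_mem (h3 i hi)⟩
  funext v
  unfold pstep
  split_ifs with h1 h2
  · obtain ⟨k, h3, -, h4⟩ := ff_some.1 h1
    obtain ⟨j, h5, -, h6⟩ := ff_some.1 h2
    rw [ff_iter k (fun i hi => Finset.mem_insert_of_mem (h4 i hi)), h3, ff_none]
    intro i
    have hp : Function.IsPeriodicPt f (j + 1) u := h5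
    rw [← hp.iterate_mod_apply]
    have hlt : i % (j + 1) < j + 1 := Nat.mod_lt _ (by omega)
    rcases hr : i % (j + 1) with _ | r
    · simp
    · exact Finset.mem_insert_of_mem (h6 r (by omega))
  · obtain ⟨k, h3, -, h4⟩ := ff_some.1 h1
    rw [ff_iter k (fun i hi => Finset.mem_insert_of_mem (h4 i hi)), h3,
      ff_mem (Finset.mem_insert_self _ _), key _ h2]
  · exact key v h1

theorem iter_lt {n : ℕ} (f : Fin n → Fin n) (v : Fin n) (k : ℕ) : ∃ i < n, f^[i] v = f^[k] v := by
  induction k using Nat.strong_induction_on with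
  | _ k ih =>
    by_cases hk : k < n
    · exact ⟨k, hk, rfl⟩
    · obtain ⟨i, j, hij, h⟩ := Fintype.exists_ne_map_eq_of_card_lt
        (fun i : Fin (n + 1) => f^[i] v) (by simp)
      wlog hlt : i < j generalizing i j
      · exact this j i hij.symm h.symm (lt_of_le_of_ne (not_lt.1 hlt) hij.symm)
      have hlt' : (i : ℕ) < j := hlt
      have hj : (j : ℕ) ≤ n := by omega
      obtain ⟨r, hr, h2⟩ := ih (k - j + i) (by omega)
      refine ⟨r, hr, ?_⟩
      rw [h2, Function.iterate_add_apply]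
      have : f^[k] v = f^[k - j] (f^[(j : ℕ)] v) := by
        rw [← Function.iterate_add_apply]; congr 1; omega
      rw [this]
      rw [h]

/-- success of parking -/
noncomputable def suc {n : ℕ} (f : Fin n → Fin n) : Finset (Fin n) → List (Fin n) → Prop
  | _, [] => True
  | O, v :: l => match firstFree f O v with
    | none => False
    | some u => suc f (insert u O) l

theorem park_suc {n : ℕ} (f : Fin n → Fin n) (occ l : List (Fin n)) :
    (parkAux n f occ l).isSome ↔ suc f occ.toFinset l := by
  induction l generalizing occ with
  | nil => simp [parkAux, suc]
  | cons v l ih =>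
    unfold parkAux suc
    rcases hx : (List.range n).find? (fun i => decide (f^[i] v ∉ occ)) with _ | i
    · rw [List.find?_eq_none] at hx
      have : firstFree f occ.toFinset v = none := by
        rw [ff_none]
        intro k
        obtain ⟨i, hi, h⟩ := iter_lt f v k
        have := hx i (by simpa using hi)
        rw [← h]
        simpa using this
      simp [this]
    · rw [List.find?_range_eq_some] at hx
      obtain ⟨h1, h2, h3⟩ := hx
      have : firstFree f occ.toFinset v = some (f^[i] v) := by
        rw [ff_some]
        refine ⟨i, rfl, by simpa using h1, fun j hj => by simpa using h3 j hj⟩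
      simp only [this]
      rw [ih, List.toFinset_cons]

/-- number of successful sequences -/
noncomputable def PC {n : ℕ} : ℕ → (Fin n → Fin n) → Finset (Fin n) → ℚ
  | 0, _, _ => 1
  | r + 1, f, O => ∑ s : Fin n, match firstFree f O s with
    | none => 0
    | some u => PC r f (insert u O)

open Classical in
theorem PC_eq {n : ℕ} (r : ℕ) (f : Fin n → Fin n) (O : Finset (Fin n)) :
    PC r f O = ∑ s : Fin r → Fin n, if suc f O (List.ofFn s) then 1 else 0 := by
  induction r generalizing O with
  | zero => simp [PC, suc]
  | succ r ih =>
    rw [← (Fin.consEquiv (fun _ => Fin n)).sum_comp, Fintype.sum_prod_type]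
    unfold PC
    refine Finset.sum_congr rfl fun s _ => ?_
    rcases hx : firstFree f O s with _ | u
    · simp [Fin.consEquiv, List.ofFn_succ, suc, hx]
    · simp only [Fin.consEquiv, List.ofFn_succ, suc, hx, ih]
      simp [hx]

/-- being the parent map of a tree -/
def IsPTree {n : ℕ} (f : Fin n → Fin n) : Prop := ∃ r, f r = r ∧ ∀ v, ∃ k, f^[k] v = r

theorem iter_fix {n : ℕ} {f : Fin n → Fin n} {r : Fin n} (h : f r = r) (k : ℕ) : f^[k] r = r :=
  Function.iterate_fixed h k

theorem tree_root {n : ℕ} {f : Fin n → Fin n} {r r' : Fin n} (h : f r = r) (h' : f r' = r')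
    (hr : ∃ k, f^[k] r' = r) : r' = r := by
  obtain ⟨k, hk⟩ := hr
  rwa [iter_fix h'] at hk

open Classical in
theorem FCount_eq (n m : ℕ) :
    (FCount n m : ℚ) = ∑ f : Fin n → Fin n, if IsPTree f then PC m f ∅ else 0 := by
  have e : {p : LabelledRootedTree n × (Fin m → Fin n) // IsTreeParking p.1 p.2} ≃
      {p : (Fin n → Fin n) × (Fin m → Fin n) // IsPTree p.1 ∧ suc p.1 ∅ (List.ofFn p.2)} := by
    refine Equiv.ofBijective (fun p => ⟨(p.1.1.parent, p.1.2),
      ⟨p.1.1.root, p.1.1.parent_root, p.1.1.reaches_root⟩, ?_⟩) ⟨?_, ?_⟩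
    · have := p.2
      unfold IsTreeParking ParkingSucceeds at this
      rw [park_suc] at this
      simpa using this
    · rintro ⟨⟨⟨r, f, h1, h2⟩, s⟩, h3⟩ ⟨⟨⟨r', f', h1', h2'⟩, s'⟩, h3'⟩ h
      simp only [Subtype.mk.injEq, Prod.mk.injEq] at h
      obtain ⟨rfl, rfl⟩ := h
      have := tree_root h1' h1 (h2' r)
      subst this
      rfl
    · rintro ⟨⟨f, s⟩, ⟨r, h1, h2⟩, h3⟩
      refine ⟨⟨⟨⟨r, f, h1, h2⟩, s⟩, ?_⟩, rfl⟩
      unfold IsTreeParking ParkingSucceeds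
      rw [park_suc]
      simpa using h3
  unfold FCount
  rw [Nat.card_congr e, Nat.card_eq_fintype_card, Fintype.card_subtype, Finset.card_filter]
  push_cast
  rw [Fintype.sum_prod_type]
  refine Finset.sum_congr rfl fun f _ => ?_
  by_cases h : IsPTree f
  · simp [h, PC_eq]
  · simp [h]

/-- blue part is a tree -/
def PVal {n : ℕ} (f : Fin n → Fin n) (O : Finset (Fin n)) : Prop :=
  ∃ r, ∀ v, firstFree f O v = none → (f r = r ∧ ∃ k, f^[k] v = r)

theorem PVal_congr {n : ℕ} {f g : Fin n → Fin n} {O : Finset (Fin n)}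
    (hfg : ∀ v ∈ O, f v = g v) (h : PVal f O) : PVal g O := by
  obtain ⟨r, hr⟩ := h
  refine ⟨r, fun v hv => ?_⟩
  rw [← ff_congr hfg] at hv
  obtain ⟨h1, k, h2⟩ := hr v hv
  rw [ff_none] at hv
  refine ⟨?_, k, ?_⟩
  · rw [← hfg r (by rw [← h2]; exact hv k), h1]
  · rw [iter_congr hfg k (fun i _ => hv i), h2]

theorem PVal_step1 {n : ℕ} {f : Fin n → Fin n} {O : Finset (Fin n)} {u : Fin n} (hu : u ∉ O)
    (h : firstFree f O (f u) ≠ some u) : PVal f (insert u O) ↔ PVal f O := by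
  unfold PVal
  rw [ff_step hu]
  constructor
  · rintro ⟨r, hr⟩
    refine ⟨r, fun v hv => hr v ?_⟩
    simp [pstep, hv]
  · rintro ⟨r, hr⟩
    refine ⟨r, fun v hv => ?_⟩
    unfold pstep at hv
    split_ifs at hv with h1
    · obtain ⟨h2, k, h3⟩ := hr _ hv
      refine ⟨h2, ?_⟩
      obtain ⟨j, h4, -⟩ := ff_some.1 h1
      refine ⟨k + (j + 1), ?_⟩
      rw [Function.iterate_add_apply, Function.iterate_succ_apply', h4, h3]
    · exact hr v hv

theorem PVal_step2 {n : ℕ} {f : Fin n → Fin n} {O : Finset (Fin n)} {u : Fin n} (hu : u ∉ O)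
    (h : firstFree f O (f u) = some u) :
    PVal f (insert u O) ↔ (∀ v, firstFree f O v ≠ none) ∧ f u = u := by
  unfold PVal
  rw [ff_step hu]
  have huu := ff_not_mem (f := f) hu
  constructor
  · rintro ⟨r, hr⟩
    obtain ⟨h1, k, h2⟩ := hr u (by simp [pstep, huu, h])
    obtain ⟨j, h5, -, h6⟩ := ff_some.1 h
    have hp : Function.IsPeriodicPt f (j + 1) u := h5
    have hur : u = r := by
      have h7 : f^[(j + 1) * k] u = u := hp.mul_const k
      rw [show (j + 1) * k = j * k + k by ring, Function.iterate_add_apply, h2, iter_fix h1] at h7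
      exact h7.symm
    subst hur
    refine ⟨fun v hv => ?_, h1⟩
    obtain ⟨-, k, h3⟩ := hr v (by simp [pstep, hv])
    rw [ff_none] at hv
    exact hu (h3 ▸ hv k)
  · rintro ⟨h1, h2⟩
    refine ⟨u, fun v hv => ⟨h2, ?_⟩⟩
    unfold pstep at hv
    split_ifs at hv with h3
    · obtain ⟨j, h4, -⟩ := ff_some.1 h3
      exact ⟨j, h4⟩
    · exact absurd hv (h1 v)

/-- size of the blue part -/
def blue {n : ℕ} (ψ : Fin n → Option (Fin n)) : ℕ := (Finset.univ.filter fun v => ψ v = none).card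

/-- size of a white part -/
def white {n : ℕ} (ψ : Fin n → Option (Fin n)) (u : Fin n) : ℕ :=
  (Finset.univ.filter fun v => ψ v = some u).card

open Classical in
/-- weight of a partial tree -/
noncomputable def dlt {n : ℕ} (f : Fin n → Fin n) (O : Finset (Fin n)) : ℚ :=
  if PVal f O then (if blue (firstFree f O) = 0 then 1 else (blue (firstFree f O) : ℚ)) else 0

theorem blue_step1 {n : ℕ} {ψ : Fin n → Option (Fin n)} {u w : Fin n}
    (h : ψ w ≠ some u) (h' : ψ w ≠ none) : blue (pstep ψ u w) = blue ψ := by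
  unfold blue
  congr 1
  ext v
  simp only [pstep, Finset.mem_filter, Finset.mem_univ, true_and, if_neg h]
  split_ifs with h1
  · simp [h1, h']
  · rfl

theorem blue_step2 {n : ℕ} {ψ : Fin n → Option (Fin n)} {u w : Fin n}
    (h : ψ w = some u ∨ ψ w = none) : blue (pstep ψ u w) = white ψ u + blue ψ := by
  unfold blue white
  rw [← Finset.card_union_of_disjoint]
  · congr 1
    ext v
    simp only [pstep, Finset.mem_filter, Finset.mem_univ, true_and, Finset.mem_union]
    rcases h with h | h <;> simp [h] <;> tauto
  · rw [Finset.disjoint_left]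
    intro v
    simp only [Finset.mem_filter, Finset.mem_univ, true_and]
    intro h1 h2
    simp [h1] at h2

theorem blue_zero {n : ℕ} {ψ : Fin n → Option (Fin n)} : blue ψ = 0 ↔ ∀ v, ψ v ≠ none := by
  unfold blue
  rw [Finset.card_eq_zero, Finset.filter_eq_empty_iff]
  simp

theorem upd_congr {n : ℕ} (f : Fin n → Fin n) {O : Finset (Fin n)} {u : Fin n} (hu : u ∉ O)
    (w : Fin n) : ∀ v ∈ O, f v = Function.update f u w v := by
  intro v hv
  rw [Function.update_of_ne]
  rintro rfl; exact hu hv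

open Classical in
theorem dlt_upd {n : ℕ} (f : Fin n → Fin n) {O : Finset (Fin n)} {u : Fin n} (hu : u ∉ O)
    (w : Fin n) : dlt (Function.update f u w) (insert u O) =
      if firstFree f O w = none then
        (if PVal f O then (white (firstFree f O) u + blue (firstFree f O) : ℚ) else 0)
      else if firstFree f O w = some u then
        (if blue (firstFree f O) = 0 ∧ w = u then (white (firstFree f O) u : ℚ) else 0)
      else dlt f O := by
  have hw : Function.update f u w u = w := by simp
  have hc := upd_congr f hu w
  have hff := ff_congr hc
  have hv : PVal (Function.update f u w) O ↔ PVal f O :=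
    ⟨PVal_congr (fun v hv => (hc v hv).symm), PVal_congr hc⟩
  have hwp : 0 < white (firstFree f O) u := by
    unfold white
    rw [Finset.card_pos]
    exact ⟨u, by simp [ff_not_mem hu]⟩
  by_cases h1 : firstFree f O w = none
  · have h2 : firstFree (Function.update f u w) O (Function.update f u w u) ≠ some u := by
      rw [← hff, hw, h1]; simp
    rw [if_pos h1]
    unfold dlt
    rw [PVal_step1 hu h2, hv, ff_step hu, hw, ← hff, blue_step2 (Or.inr h1)]
    rw [if_neg (show ¬ (white (firstFree f O) u + blue (firstFree f O) = 0) by omega)]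
    push_cast
    rfl
  rw [if_neg h1]
  by_cases h2 : firstFree f O w = some u
  · have h2' : firstFree (Function.update f u w) O (Function.update f u w u) = some u := by
      rw [← hff, hw, h2]
    rw [if_pos h2]
    unfold dlt
    rw [PVal_step2 hu h2', ← hff, hw, ff_step hu, hw, ← hff, blue_step2 (Or.inl h2), ← blue_zero]
    rw [if_neg (show ¬ (white (firstFree f O) u + blue (firstFree f O) = 0) by omega)]
    by_cases h3 : blue (firstFree f O) = 0 ∧ w = u
    · simp [h3]
    · rw [if_neg h3, if_neg h3]
  · have h2' : firstFree (Function.update f u w) O (Function.update f u w u) ≠ some u := by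
      rw [← hff, hw]; exact h2
    rw [if_neg h2]
    unfold dlt
    rw [PVal_step1 hu h2', hv, ff_step hu, hw, ← hff, blue_step1 h2 h1]

theorem sum_none {n : ℕ} (ψ : Fin n → Option (Fin n)) (c : ℚ) :
    ∑ w, (if ψ w = none then c else 0) = blue ψ * c := by
  rw [← Finset.sum_filter, Finset.sum_const, nsmul_eq_mul]; rfl

theorem sum_some {n : ℕ} (ψ : Fin n → Option (Fin n)) (u : Fin n) (c : ℚ) :
    ∑ w, (if ψ w = some u then c else 0) = white ψ u * c := by
  rw [← Finset.sum_filter, Finset.sum_const, nsmul_eq_mul]; rfl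

open Classical in
theorem star {n : ℕ} (f : Fin n → Fin n) {O : Finset (Fin n)} {u : Fin n} (hu : u ∉ O)
    (G : (Fin n → Option (Fin n)) → ℚ) :
    ∑ w, dlt (Function.update f u w) (insert u O) * G (pstep (firstFree f O) u w) =
      dlt f O * ∑ w, G (pstep (firstFree f O) u w) := by
  have huu := ff_not_mem (f := f) hu
  have h0 : ∀ w, dlt (Function.update f u w) (insert u O) * G (pstep (firstFree f O) u w) =
      dlt f O * G (pstep (firstFree f O) u w) +
      ((if firstFree f O w = none then
        (if PVal f O then (white (firstFree f O) u + blue (firstFree f O) : ℚ) else 0) - dlt f O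
        else 0) + ((if firstFree f O w = some u then - dlt f O else 0) +
        (if w = u then (if blue (firstFree f O) = 0 then (white (firstFree f O) u : ℚ) else 0)
          else 0))) *
        G (fun v => if firstFree f O v = some u then none else firstFree f O v) := by
    intro w
    rw [dlt_upd f hu]
    by_cases h1 : firstFree f O w = none
    · have : pstep (firstFree f O) u w =
        (fun v => if firstFree f O v = some u then none else firstFree f O v) := by
        funext v; simp [pstep, h1]
      have hwu : w ≠ u := by rintro rfl; simp [huu] at h1
      rw [this, if_pos h1, if_pos h1, if_neg hwu, h1]
      simp only [reduceCtorEq, if_false]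
      ring
    by_cases h2 : firstFree f O w = some u
    · have : pstep (firstFree f O) u w =
        (fun v => if firstFree f O v = some u then none else firstFree f O v) := by
        funext v; simp [pstep, h2]
      rw [this, if_neg h1, if_neg h1, if_pos h2, if_pos h2]
      by_cases hwu : w = u
      · simp only [hwu, and_true, if_true]; ring
      · simp only [hwu, and_false, if_false]; ring
    · have hwu : w ≠ u := by rintro rfl; exact h2 huu
      rw [if_neg h1, if_neg h1, if_neg h2, if_neg h2, if_neg hwu]
      ring
  rw [Finset.sum_congr rfl fun w _ => h0 w, Finset.sum_add_distrib, ← Finset.mul_sum,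
    ← Finset.sum_mul, Finset.sum_add_distrib, Finset.sum_add_distrib, sum_none, sum_some,
    Finset.sum_ite_eq' Finset.univ u, if_pos (Finset.mem_univ u)]
  rw [add_eq_left, mul_eq_zero]
  left
  by_cases hb : blue (firstFree f O) = 0
  · have hv : PVal f O := ⟨u, fun v hv => absurd hv (blue_zero.1 hb v)⟩
    simp [dlt, hb, hv]
  · by_cases hv : PVal f O
    · simp only [dlt, hb, hv, if_true, if_false]; ring
    · simp only [dlt, hb, hv, if_false]; ring

/-- number of continuations of the component process -/
def JC {n : ℕ} : ℕ → (Fin n → Option (Fin n)) → ℚ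
  | 0, _ => 1
  | r + 1, ψ => ∑ s : Fin n, match ψ s with
    | none => 0
    | some u => ∑ w, JC r (pstep ψ u w)

open Classical in
theorem sum_upd {n : ℕ} (f : Fin n → Fin n) {O : Finset (Fin n)} {u : Fin n} (hu : u ∉ O)
    (H : (Fin n → Fin n) → ℚ) :
    ∑ g, (if IsPTree g ∧ (∀ v ∈ O, g v = f v) then H g else 0) =
    ∑ w, ∑ g, (if IsPTree g ∧ (∀ v ∈ insert u O, g v = Function.update f u w v) then H g else 0)
      := by
  rw [Finset.sum_comm]
  refine Finset.sum_congr rfl fun g _ => ?_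
  rw [Finset.sum_eq_single (g u)]
  · congr 1
    apply propext
    have := upd_congr f hu (g u)
    constructor
    · rintro ⟨h1, h2⟩
      refine ⟨h1, fun v hv => ?_⟩
      rw [Finset.mem_insert] at hv
      rcases hv with rfl | hv
      · simp
      · rw [h2 v hv, this v hv]
    · rintro ⟨h1, h2⟩
      refine ⟨h1, fun v hv => ?_⟩
      rw [h2 v (Finset.mem_insert_of_mem hv), this v hv]
  · intro w _ hw
    rw [if_neg]
    rintro ⟨-, h⟩
    have := h u (Finset.mem_insert_self _ _)
    simp at this
    exact hw this.symm
  · simp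

open Classical in
theorem main_base {n : ℕ} (hn : 0 < n) (d : ℕ) (f : Fin n → Fin n) (O : Finset (Fin n))
    (hd : n = O.card + d) :
    (n : ℚ) * ∑ g, (if IsPTree g ∧ (∀ v ∈ O, g v = f v) then (1 : ℚ) else 0) =
      dlt f O * (n : ℚ) ^ d := by
  induction d generalizing f O with
  | zero =>
    have hO : O = Finset.univ := by
      rw [← Finset.card_eq_iff_eq_univ]; simp; omega
    subst hO
    have hff : ∀ v, firstFree f Finset.univ v = none := fun v => ff_none.2 fun k => by simp
    have hb : blue (firstFree f Finset.univ) = n := by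
      unfold blue
      simp [hff]
    rw [Finset.sum_eq_single f]
    · have hv : PVal f Finset.univ ↔ IsPTree f := by
        unfold PVal IsPTree
        constructor
        · rintro ⟨r, h⟩
          exact ⟨r, (h r (hff r)).1, fun v => (h v (hff v)).2⟩
        · rintro ⟨r, h⟩
          exact ⟨r, fun v _ => ⟨h.1, h.2 v⟩⟩
      unfold dlt
      rw [hb, if_neg hn.ne', hv]
      by_cases h : IsPTree f <;> simp [h]
    · intro g _ hg
      rw [if_neg]
      rintro ⟨-, h⟩
      exact hg (funext fun v => h v (Finset.mem_univ v))
    · simp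
  | succ d ih =>
    obtain ⟨u, hu⟩ : ∃ u, u ∉ O := by
      by_contra h
      push Not at h
      have : O = Finset.univ := Finset.eq_univ_iff_forall.2 h
      subst this
      simp at hd
    rw [sum_upd f hu, Finset.mul_sum]
    rw [Finset.sum_congr rfl fun w _ => ih (Function.update f u w) (insert u O)
      (by rw [Finset.card_insert_of_notMem hu]; omega)]
    rw [← Finset.sum_mul]
    have := star f hu (fun _ => 1)
    simp only [mul_one, Finset.sum_const, Finset.card_univ, Fintype.card_fin, nsmul_eq_mul] at this
    rw [this]
    ring

open Classical in
theorem main_step {n : ℕ} (hn : 0 < n) (r : ℕ) (d : ℕ) (f : Fin n → Fin n) (O : Finset (Fin n))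
    (hd : n = O.card + d) :
    (n : ℚ) ^ (r + 1) * ∑ g, (if IsPTree g ∧ (∀ v ∈ O, g v = f v) then PC r g O else 0) =
      dlt f O * (n : ℚ) ^ d * JC r (firstFree f O) := by
  induction r generalizing d f O with
  | zero =>
    simp only [PC, JC, zero_add, pow_one, mul_one]
    exact main_base hn d f O hd
  | succ r ih =>
    have h1 : ∑ g, (if IsPTree g ∧ (∀ v ∈ O, g v = f v) then PC (r + 1) g O else 0) =
        ∑ s : Fin n, match firstFree f O s with
          | none => 0
          | some u => ∑ g, (if IsPTree g ∧ (∀ v ∈ O, g v = f v) then PC r g (insert u O) else 0)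
        := by
      have h2 : ∀ g, (if IsPTree g ∧ (∀ v ∈ O, g v = f v) then PC (r + 1) g O else 0) =
          ∑ s : Fin n, if IsPTree g ∧ (∀ v ∈ O, g v = f v) then (match firstFree f O s with
          | none => 0
          | some u => PC r g (insert u O)) else 0 := by
        intro g
        split_ifs with h
        · rw [PC, ff_congr h.2]
        · simp
      rw [Finset.sum_congr rfl fun g _ => h2 g, Finset.sum_comm]
      refine Finset.sum_congr rfl fun s _ => ?_
      rcases firstFree f O s with _ | u
      · simp
      · rfl
    rw [h1, JC, Finset.mul_sum, Finset.mul_sum]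
    refine Finset.sum_congr rfl fun s _ => ?_
    rcases hx : firstFree f O s with _ | u
    · simp
    · have hu : u ∉ O := by
        obtain ⟨k, _, h, _⟩ := ff_some.1 hx
        exact h
      have hcard := Finset.card_insert_of_notMem hu
      obtain ⟨e, rfl⟩ : ∃ e, d = e + 1 := by
        refine ⟨d - 1, ?_⟩
        have := Finset.card_le_univ (insert u O)
        simp at this
        omega
      dsimp only
      rw [sum_upd f hu, pow_succ, mul_comm ((n : ℚ) ^ (r + 1)), mul_assoc, Finset.mul_sum]
      rw [Finset.sum_congr rfl fun w _ => ih e (Function.update f u w) (insert u O) (by omega)]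
      have h3 : ∀ w, dlt (Function.update f u w) (insert u O) * (n : ℚ) ^ e *
          JC r (firstFree (Function.update f u w) (insert u O)) = (n : ℚ) ^ e *
          (dlt (Function.update f u w) (insert u O) * JC r (pstep (firstFree f O) u w)) := by
        intro w
        rw [ff_step hu, ← ff_congr (upd_congr f hu w), Function.update_self]
        ring
      rw [Finset.sum_congr rfl fun w _ => h3 w, ← Finset.mul_sum, star f hu]
      ring

theorem part_one {n : ℕ} (hn : 0 < n) (m : ℕ) :
    (n : ℚ) ^ (m + 1) * (FCount n m : ℚ) = (n : ℚ) ^ n * JC m (fun v : Fin n => some v) := by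
  classical
  have h := main_step hn m n (fun v => v) ∅ (by simp)
  have h1 : firstFree (fun v : Fin n => v) ∅ = fun v => some v :=
    funext fun v => ff_not_mem (by simp)
  have h2 : dlt (fun v : Fin n => v) ∅ = 1 := by
    have hb : blue (firstFree (fun v : Fin n => v) ∅) = 0 := by
      rw [h1]; simp [blue]
    have hv : PVal (fun v : Fin n => v) ∅ :=
      ⟨⟨0, hn⟩, fun v hv => absurd hv (blue_zero.1 hb v)⟩
    simp [dlt, hb, hv]
  rw [h1, h2] at h
  simp only [Finset.notMem_empty, false_implies, implies_true, and_true, one_mul] at h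
  rw [FCount_eq, ← h]

/-- fibre size -/
def cnt {n : ℕ} (ψ : Fin n → Option (Fin n)) (x : Option (Fin n)) : ℕ :=
  (Finset.univ.filter fun v => ψ v = x).card

/-- number of sequences leading to a given state -/
def EC {n : ℕ} : ℕ → (Fin n → Option (Fin n)) → ℚ
  | 0, ψ => if ψ = (fun v => some v) then 1 else 0
  | k + 1, ψ' => ∑ ψ : Fin n → Option (Fin n), ∑ s : Fin n, match ψ s with
    | none => 0
    | some u => ∑ w, if pstep ψ u w = ψ' then EC k ψ else 0

theorem EC_JC_step {n : ℕ} (k r : ℕ) :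
    ∑ ψ : Fin n → Option (Fin n), EC (k + 1) ψ * JC r ψ =
      ∑ ψ : Fin n → Option (Fin n), EC k ψ * JC (r + 1) ψ := by
  simp only [EC, JC, Finset.sum_mul, Finset.mul_sum]
  rw [Finset.sum_comm]
  refine Finset.sum_congr rfl fun ψ _ => ?_
  rw [Finset.sum_comm]
  refine Finset.sum_congr rfl fun s _ => ?_
  rcases ψ s with _ | u
  · simp
  · simp only [Finset.sum_mul, Finset.mul_sum]
    rw [Finset.sum_comm]
    refine Finset.sum_congr rfl fun w _ => ?_
    rw [Finset.sum_eq_single (pstep ψ u w)]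
    · simp
    · intro b _ hb
      rw [if_neg hb.symm, zero_mul]
    · simp

theorem JC_eq {n : ℕ} (m : ℕ) :
    JC m (fun v : Fin n => some v) = ∑ ψ : Fin n → Option (Fin n), EC m ψ := by
  have h : ∀ k r, ∑ ψ : Fin n → Option (Fin n), EC k ψ * JC r ψ =
      JC (k + r) (fun v : Fin n => some v) := by
    intro k
    induction k with
    | zero => intro r; simp [EC]
    | succ k ih => intro r; rw [EC_JC_step, ih]; congr 1; omega
  rw [← add_zero m, ← h m 0]
  simp [JC]

/-- idempotent states -/
def SV {n : ℕ} (ψ : Fin n → Option (Fin n)) : Prop := ∀ v u, ψ v = some u → ψ u = some u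

/-- vacant vertices -/
def vac {n : ℕ} (ψ : Fin n → Option (Fin n)) : Finset (Fin n) :=
  Finset.univ.filter fun u => ψ u = some u

/-- weight of a state -/
def wt {n : ℕ} (κ β : ℕ → ℚ) (ψ : Fin n → Option (Fin n)) : ℚ :=
  (∏ u, κ (cnt ψ (some u))) * β (cnt ψ none)

theorem step_vac {n : ℕ} {ψ : Fin n → Option (Fin n)} {u : Fin n} (w : Fin n) (hV : SV ψ)
    (hu : ψ u = some u) (x : Fin n) :
    pstep ψ u w x = some x ↔ ψ x = some x ∧ x ≠ u := by
  unfold pstep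
  split_ifs with h1 h2
  · simp only [false_iff, reduceCtorEq]
    rintro ⟨h3, h4⟩
    rw [h1] at h3; simp at h3; exact h4 h3.symm
  · constructor
    · intro h3
      have := hV _ _ h3
      rw [h1] at this
      simp at this
      subst this
      exact absurd h3 h2
    · rintro ⟨h3, h4⟩
      rw [h1] at h3; simp at h3; exact absurd h3.symm h4
  · constructor
    · intro h
      exact ⟨h, by rintro rfl; exact h1 h⟩
    · exact fun h => h.1

theorem step_SV {n : ℕ} {ψ : Fin n → Option (Fin n)} {u : Fin n} (w : Fin n) (hV : SV ψ)
    (hu : ψ u = some u) : SV (pstep ψ u w) := by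
  intro v y hv
  rw [step_vac w hV hu]
  unfold pstep at hv
  split_ifs at hv with h1 h2
  · exact ⟨hV _ _ hv, by rintro rfl; exact h2 hv⟩
  · exact ⟨hV _ _ hv, by rintro rfl; exact h1 hv⟩

theorem step_card {n : ℕ} {ψ : Fin n → Option (Fin n)} {u : Fin n} (w : Fin n) (hV : SV ψ)
    (hu : ψ u = some u) : (vac (pstep ψ u w)).card + 1 = (vac ψ).card := by
  have : vac (pstep ψ u w) = (vac ψ).erase u := by
    ext x
    simp only [vac, Finset.mem_filter, Finset.mem_univ, true_and, Finset.mem_erase,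
      step_vac w hV hu]
    tauto
  rw [this, Finset.card_erase_add_one]
  simp [vac, hu]

/-- undo a step -/
def put {n : ℕ} (ψ : Fin n → Option (Fin n)) (u : Fin n) (D : Finset (Fin n)) :
    Fin n → Option (Fin n) :=
  fun v => if v ∈ insert u D then some u else ψ v

/-- the admissible region -/
def reg {n : ℕ} (ψ : Fin n → Option (Fin n)) (u : Fin n) : Finset (Fin n) :=
  Finset.univ.filter fun v => v ≠ u ∧ ψ v = ψ u ∧ some v ≠ ψ u

section putsec
variable {n : ℕ} {ψ : Fin n → Option (Fin n)} {u : Fin n} {D : Finset (Fin n)}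

theorem reg_val (hD : D ⊆ reg ψ u) {v : Fin n} (hv : v ∈ insert u D) : ψ v = ψ u := by
  rw [Finset.mem_insert] at hv
  rcases hv with rfl | hv
  · rfl
  · have := hD hv
    simp only [reg, Finset.mem_filter] at this
    exact this.2.2.1

theorem reg_ne (hu : ψ u ≠ some u) (hD : D ⊆ reg ψ u) {v : Fin n} (hv : v ∈ insert u D) :
    ψ u ≠ some v := by
  rw [Finset.mem_insert] at hv
  rcases hv with rfl | hv
  · exact hu
  · have := hD hv
    simp only [reg, Finset.mem_filter] at this
    exact this.2.2.2.symm

theorem u_notMem (hD : D ⊆ reg ψ u) : u ∉ D := by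
  intro h
  have := hD h
  simp [reg] at this

theorem put_u (hV : SV ψ) (hu : ψ u ≠ some u) (v : Fin n) :
    put ψ u D v = some u ↔ v ∈ insert u D := by
  unfold put
  split_ifs with h
  · simp [h]
  · simp only [h, iff_false]
    intro h1; exact hu (hV _ _ h1)

theorem put_ne {x : Option (Fin n)} (hx : x ≠ some u) (v : Fin n) :
    put ψ u D v = x ↔ ψ v = x ∧ v ∉ insert u D := by
  unfold put
  split_ifs with h
  · simp only [h, not_true, and_false, iff_false]; exact hx.symm
  · simp [h]

theorem put_vac (hV : SV ψ) (hu : ψ u ≠ some u) (hD : D ⊆ reg ψ u) (y : Fin n) :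
    put ψ u D y = some y ↔ y = u ∨ ψ y = some y := by
  by_cases hy : y = u
  · subst hy; simp [put]
  · rw [put_ne (by simpa using hy)]
    simp only [hy, false_or, and_iff_left_iff_imp]
    intro h1 h2
    apply reg_ne hu hD h2
    rw [← reg_val hD h2, h1]

theorem put_SV (hV : SV ψ) (hu : ψ u ≠ some u) (hD : D ⊆ reg ψ u) : SV (put ψ u D) := by
  intro v y h
  rw [put_vac hV hu hD]
  by_cases hy : y = u
  · exact Or.inl hy
  · rw [put_ne (by simpa using hy)] at h
    exact Or.inr (hV _ _ h.1)

theorem put_card (hV : SV ψ) (hu : ψ u ≠ some u) (hD : D ⊆ reg ψ u) :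
    (vac (put ψ u D)).card = (vac ψ).card + 1 := by
  have : vac (put ψ u D) = insert u (vac ψ) := by
    ext y
    simp [vac, put_vac hV hu hD]
  rw [this, Finset.card_insert_of_notMem]
  simpa [vac] using hu

theorem put_cnt_u (hV : SV ψ) (hu : ψ u ≠ some u) (hD : D ⊆ reg ψ u) :
    cnt (put ψ u D) (some u) = D.card + 1 := by
  rw [← Finset.card_insert_of_notMem (u_notMem hD)]
  unfold cnt
  congr 1
  ext v
  simp [put_u hV hu]

theorem put_cnt_ne {x : Option (Fin n)} (hx : x ≠ some u) (hx' : x ≠ ψ u) (hD : D ⊆ reg ψ u) :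
    cnt (put ψ u D) x = cnt ψ x := by
  unfold cnt
  congr 1
  ext v
  simp only [Finset.mem_filter, Finset.mem_univ, true_and, put_ne hx, and_iff_left_iff_imp]
  rintro rfl h2
  exact hx' (reg_val hD h2)

theorem put_cnt_eq (hu : ψ u ≠ some u) (hD : D ⊆ reg ψ u) :
    cnt ψ (ψ u) = cnt (put ψ u D) (ψ u) + (D.card + 1) := by
  rw [← Finset.card_insert_of_notMem (u_notMem hD)]
  unfold cnt
  rw [← Finset.card_union_of_disjoint]
  · congr 1
    ext v
    simp only [Finset.mem_filter, Finset.mem_univ, true_and, Finset.mem_union, put_ne hu]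
    constructor
    · intro h; by_cases h2 : v ∈ insert u D
      · exact Or.inr h2
      · exact Or.inl ⟨h, h2⟩
    · rintro (h | h)
      · exact h.1
      · exact reg_val hD h
  · rw [Finset.disjoint_left]
    intro v
    simp only [Finset.mem_filter, Finset.mem_univ, true_and, put_ne hu]
    exact fun h => h.2

theorem put_step (hV : SV ψ) (hu : ψ u ≠ some u) (hD : D ⊆ reg ψ u) (w : Fin n) :
    pstep (put ψ u D) u w = ψ ↔
      (if put ψ u D w = some u then none else put ψ u D w) = ψ u := by
  constructor
  · intro h
    have h1 := congrFun h u
    unfold pstep at h1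
    rw [if_pos ((put_u hV hu u).2 (Finset.mem_insert_self _ _))] at h1
    exact h1
  · intro h
    funext v
    unfold pstep
    rw [h]
    split_ifs with h1
    · exact (reg_val hD ((put_u hV hu v).1 h1)).symm
    · rw [put_u hV hu] at h1
      simp only [put, if_neg h1]

theorem put_inj {D' : Finset (Fin n)} (hV : SV ψ) (hu : ψ u ≠ some u) (hD : D ⊆ reg ψ u)
    (hD' : D' ⊆ reg ψ u) (h : put ψ u D = put ψ u D') : D = D' := by
  have h1 : insert u D = insert u D' := by
    ext v
    rw [← put_u hV hu, h, put_u hV hu]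
  rw [← Finset.erase_insert (u_notMem hD), h1, Finset.erase_insert (u_notMem hD')]

theorem exists_put {φ : Fin n → Option (Fin n)} {w : Fin n} (hφ : SV φ) (hφu : φ u = some u)
    (h : pstep φ u w = ψ) : ∃ D, D ⊆ reg ψ u ∧ put ψ u D = φ := by
  refine ⟨(Finset.univ.filter fun v => φ v = some u).erase u, ?_, ?_⟩
  · intro v hv
    simp only [Finset.mem_erase, Finset.mem_filter, Finset.mem_univ, true_and] at hv
    have h1 : ψ v = ψ u := by
      rw [← h]; simp [pstep, hv.2, hφu]
    simp only [reg, Finset.mem_filter, Finset.mem_univ, true_and]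
    refine ⟨hv.1, h1, ?_⟩
    rw [← h1]
    intro h2
    rw [← h] at h2
    have := ((step_vac w hφ hφu v).1 h2.symm).1
    rw [hv.2] at this
    simp at this
    exact hv.1 this.symm
  · funext v
    unfold put
    rw [Finset.insert_erase (by simp [hφu])]
    split_ifs with h1
    · simp at h1; exact h1.symm
    · simp at h1; rw [← h]; simp [pstep, h1]

end putsec

theorem sum_ind {n : ℕ} (p : Fin n → Prop) [DecidablePred p] (c : ℚ) :
    ∑ w, (if p w then c else 0) = (Finset.univ.filter p).card * c := by
  rw [← Finset.sum_filter, Finset.sum_const, nsmul_eq_mul]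

theorem sum_pow {α : Type*} (s : Finset α) (F : Finset α → ℚ) (g : ℕ → ℚ)
    (h : ∀ D ∈ s.powerset, F D = g D.card) :
    ∑ D ∈ s.powerset, F D = ∑ i ∈ Finset.range (s.card + 1), (s.card.choose i : ℚ) * g i := by
  rw [Finset.sum_congr rfl h, Finset.sum_powerset_apply_card]
  simp only [nsmul_eq_mul]

open Classical in
theorem R_val {n : ℕ} (κ β : ℕ → ℚ) (k0 : κ 0 = 1)
    (hκ : ∀ p : ℕ, ∑ i ∈ Finset.range (p + 1), (p.choose i : ℚ) *
      (((i : ℚ) + 1) * κ (i + 1) * (((p - i : ℕ) + 1 : ℚ) * κ (p - i + 1))) = κ (p + 2))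
    (hβ : ∀ p : ℕ, ((p : ℚ) + 1) * ∑ i ∈ Finset.range (p + 1), (p.choose i : ℚ) *
      (((i : ℚ) + 1) * κ (i + 1) * β (p - i)) = β (p + 1))
    {ψ : Fin n → Option (Fin n)} {u : Fin n} (hV : SV ψ) (hu : ψ u ≠ some u) :
    ∑ D ∈ (reg ψ u).powerset, (cnt (put ψ u D) (some u) : ℚ) *
      ((Finset.univ.filter fun w => pstep (put ψ u D) u w = ψ).card * wt κ β (put ψ u D)) =
      wt κ β ψ := by
  have hu0 : cnt ψ (some u) = 0 := by
    unfold cnt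
    rw [Finset.card_eq_zero, Finset.filter_eq_empty_iff]
    intro v _ h
    exact hu (hV _ _ h)
  rcases hx : ψ u with _ | y
  · have hreg : cnt ψ none = (reg ψ u).card + 1 := by
      have h1 := put_cnt_eq (D := reg ψ u) hu subset_rfl
      rw [hx] at h1
      rw [h1]
      have : cnt (put ψ u (reg ψ u)) none = 0 := by
        unfold cnt
        rw [Finset.card_eq_zero, Finset.filter_eq_empty_iff]
        intro v _
        rw [put_ne (by simp)]
        rintro ⟨h2, h3⟩
        apply h3
        by_cases hv : v = u
        · simp [hv]
        · apply Finset.mem_insert_of_mem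
          simp [reg, hx, h2, hv]
      omega
    have h2 : ∀ D ∈ (reg ψ u).powerset, (cnt (put ψ u D) (some u) : ℚ) *
      ((Finset.univ.filter fun w => pstep (put ψ u D) u w = ψ).card * wt κ β (put ψ u D)) =
      (fun i : ℕ => (∏ z ∈ Finset.univ.erase u, κ (cnt ψ (some z))) * (((reg ψ u).card : ℚ) + 1) *
        (((i : ℚ) + 1) * κ (i + 1) * β ((reg ψ u).card - i))) D.card := by
      intro D hD
      rw [Finset.mem_powerset] at hD
      have hle := Finset.card_le_card hD
      have h3 := put_cnt_eq hu hD
      rw [hx] at h3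
      have h4 : (Finset.univ.filter fun w => pstep (put ψ u D) u w = ψ).card =
          (reg ψ u).card + 1 := by
        rw [← hreg]
        unfold cnt
        congr 1
        ext w
        simp only [Finset.mem_filter, Finset.mem_univ, true_and, put_step hV hu hD, hx]
        by_cases hw : w ∈ insert u D
        · rw [if_pos ((put_u hV hu w).2 hw)]
          simp [reg_val hD hw, hx]
        · rw [if_neg (by rw [put_u hV hu]; exact hw)]
          simp [put, hw]
      rw [h4, put_cnt_u hV hu hD]
      unfold wt
      rw [← Finset.mul_prod_erase _ _ (Finset.mem_univ u), put_cnt_u hV hu hD,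
        show cnt (put ψ u D) none = (reg ψ u).card - D.card by omega]
      rw [Finset.prod_congr rfl (g := fun z => κ (cnt ψ (some z))) fun z hz => by
        rw [put_cnt_ne (by simpa using hz) (by rw [hx]; simp) hD]]
      push_cast
      ring
    rw [sum_pow _ _ (fun i : ℕ => (∏ z ∈ Finset.univ.erase u, κ (cnt ψ (some z))) * (((reg ψ u).card : ℚ) + 1) *
        (((i : ℚ) + 1) * κ (i + 1) * β ((reg ψ u).card - i))) h2]
    have h5 := hβ (reg ψ u).card
    unfold wt
    rw [hreg, ← h5, ← Finset.mul_prod_erase _ _ (Finset.mem_univ u), hu0, k0, Finset.mul_sum,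
      Finset.mul_sum]
    refine Finset.sum_congr rfl fun i _ => ?_
    ring
  · have hyu : y ≠ u := by rintro rfl; exact hu hx
    have hyy : ψ y = some y := hV _ _ hx
    have hreg : cnt ψ (some y) = (reg ψ u).card + 2 := by
      have h1 := put_cnt_eq (D := reg ψ u) hu subset_rfl
      rw [hx] at h1
      rw [h1]
      have : cnt (put ψ u (reg ψ u)) (some y) = 1 := by
        unfold cnt
        rw [Finset.card_eq_one]
        refine ⟨y, ?_⟩
        ext v
        simp only [Finset.mem_filter, Finset.mem_univ, true_and, Finset.mem_singleton]
        rw [put_ne (by simpa using hyu)]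
        constructor
        · rintro ⟨h2, h3⟩
          by_contra hvy
          apply h3
          by_cases hv : v = u
          · simp [hv]
          · apply Finset.mem_insert_of_mem
            simp [reg, hx, h2, hv, hvy]
        · rintro rfl
          exact ⟨hyy, fun h => reg_ne hu subset_rfl h hx⟩
      omega
    have hyE : y ∈ Finset.univ.erase u := by simp [hyu]
    have h2 : ∀ D ∈ (reg ψ u).powerset, (cnt (put ψ u D) (some u) : ℚ) *
      ((Finset.univ.filter fun w => pstep (put ψ u D) u w = ψ).card * wt κ β (put ψ u D)) =
      (fun i : ℕ => (∏ z ∈ (Finset.univ.erase u).erase y, κ (cnt ψ (some z))) * β (cnt ψ none) *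
        (((i : ℚ) + 1) * κ (i + 1) * ((((reg ψ u).card - i : ℕ) + 1 : ℚ) *
          κ ((reg ψ u).card - i + 1)))) D.card := by
      intro D hD
      rw [Finset.mem_powerset] at hD
      have hle := Finset.card_le_card hD
      have h3 := put_cnt_eq hu hD
      rw [hx] at h3
      have h3' : cnt (put ψ u D) (some y) = (reg ψ u).card - D.card + 1 := by omega
      have h4 : (Finset.univ.filter fun w => pstep (put ψ u D) u w = ψ).card =
          cnt (put ψ u D) (some y) := by
        unfold cnt
        congr 1
        ext w
        simp only [Finset.mem_filter, Finset.mem_univ, true_and, put_step hV hu hD, hx]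
        split_ifs with hw
        · rw [hw]; simp [hyu.symm]
        · rfl
      rw [h4, put_cnt_u hV hu hD]
      unfold wt
      rw [← Finset.mul_prod_erase _ _ (Finset.mem_univ u), put_cnt_u hV hu hD,
        ← Finset.mul_prod_erase _ _ hyE, h3',
        put_cnt_ne (x := none) (by simp) (by rw [hx]; simp) hD]
      rw [Finset.prod_congr rfl (g := fun z => κ (cnt ψ (some z))) fun z hz => by
        simp only [Finset.mem_erase, Finset.mem_univ, and_true] at hz
        rw [put_cnt_ne (by simpa using hz.2) (by rw [hx]; simpa using hz.1) hD]]
      push_cast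
      ring
    rw [sum_pow _ _ (fun i : ℕ => (∏ z ∈ (Finset.univ.erase u).erase y, κ (cnt ψ (some z))) * β (cnt ψ none) *
        (((i : ℚ) + 1) * κ (i + 1) * ((((reg ψ u).card - i : ℕ) + 1 : ℚ) *
          κ ((reg ψ u).card - i + 1)))) h2]
    have h5 := hκ (reg ψ u).card
    unfold wt
    rw [← Finset.mul_prod_erase _ _ (Finset.mem_univ u), hu0, k0,
      ← Finset.mul_prod_erase _ _ hyE, hreg, ← h5, one_mul, Finset.sum_mul,
      Finset.sum_mul]
    refine Finset.sum_congr rfl fun i _ => ?_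
    ring

open Classical in
theorem EC_eq {n : ℕ} (κ β : ℕ → ℚ) (k0 : κ 0 = 1) (k1 : κ 1 = 1) (b0 : β 0 = 1)
    (hκ : ∀ p : ℕ, ∑ i ∈ Finset.range (p + 1), (p.choose i : ℚ) *
      (((i : ℚ) + 1) * κ (i + 1) * (((p - i : ℕ) + 1 : ℚ) * κ (p - i + 1))) = κ (p + 2))
    (hβ : ∀ p : ℕ, ((p : ℚ) + 1) * ∑ i ∈ Finset.range (p + 1), (p.choose i : ℚ) *
      (((i : ℚ) + 1) * κ (i + 1) * β (p - i)) = β (p + 1)) (k : ℕ)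
    (ψ : Fin n → Option (Fin n)) :
    EC k ψ = if SV ψ ∧ (vac ψ).card + k = n then (k.factorial : ℚ) * wt κ β ψ else 0 := by
  induction k generalizing ψ with
  | zero =>
    unfold EC
    by_cases h : ψ = fun v => some v
    · subst h
      have h1 : SV (fun v : Fin n => some v) := by intro v u h; simp
      have h2 : (vac (fun v : Fin n => some v)).card = n := by simp [vac]
      have h3 : ∀ u : Fin n, cnt (fun v : Fin n => some v) (some u) = 1 := by
        intro u
        rw [cnt, Finset.card_eq_one]
        exact ⟨u, by ext v; simp⟩
      have h4 : cnt (fun v : Fin n => some v) none = 0 := by simp [cnt]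
      simp [h1, h2, wt, h3, h4, k1, b0]
    · rw [if_neg h, if_neg]
      rintro ⟨-, h1⟩
      apply h
      have : vac ψ = Finset.univ := by
        rw [← Finset.card_eq_iff_eq_univ]; simpa using h1
      funext v
      have hv : v ∈ vac ψ := by rw [this]; simp
      simpa [vac] using hv
  | succ k ih =>
    have hR : EC (k + 1) ψ = ∑ u : Fin n, ∑ φ : Fin n → Option (Fin n), (cnt φ (some u) : ℚ) *
        ((Finset.univ.filter fun w => pstep φ u w = ψ).card * EC k φ) := by
      rw [EC, Finset.sum_comm (s := (Finset.univ : Finset (Fin n)))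
        (t := (Finset.univ : Finset (Fin n → Option (Fin n)))) (f := fun u φ =>
        (cnt φ (some u) : ℚ) * ((Finset.univ.filter fun w => pstep φ u w = ψ).card * EC k φ))]
      refine Finset.sum_congr rfl fun φ _ => ?_
      have : ∀ s, (match φ s with
          | none => 0
          | some u => ∑ w, if pstep φ u w = ψ then EC k φ else 0) =
          ∑ u, if φ s = some u then
            ((Finset.univ.filter fun w => pstep φ u w = ψ).card * EC k φ) else 0 := by
        intro s
        rcases φ s with _ | u
        · simp
        · simp only [Option.some.injEq, Finset.sum_ite_eq, Finset.mem_univ, if_true]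
          rw [sum_ind]
      rw [Finset.sum_congr rfl fun s _ => this s, Finset.sum_comm]
      refine Finset.sum_congr rfl fun u _ => ?_
      rw [sum_ind]
      rfl
    rw [hR]
    have key : ∀ u φ, (cnt φ (some u) : ℚ) *
        ((Finset.univ.filter fun w => pstep φ u w = ψ).card * EC k φ) ≠ 0 →
        SV φ ∧ (vac φ).card + k = n ∧ φ u = some u ∧ ∃ w, pstep φ u w = ψ := by
      intro u φ h
      have h1 : (cnt φ (some u) : ℚ) ≠ 0 := left_ne_zero_of_mul h
      have h2 := left_ne_zero_of_mul (right_ne_zero_of_mul h)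
      have h3 := right_ne_zero_of_mul (right_ne_zero_of_mul h)
      rw [ih] at h3
      simp only [ne_eq, ite_eq_right_iff, not_forall] at h3
      obtain ⟨⟨h4, h5⟩, -⟩ := h3
      refine ⟨h4, h5, ?_, ?_⟩
      · rw [Nat.cast_ne_zero, cnt, Finset.card_ne_zero] at h1
        obtain ⟨v, hv⟩ := h1
        exact h4 v u (by simpa using hv)
      · rw [Nat.cast_ne_zero, Finset.card_ne_zero] at h2
        obtain ⟨w, hw⟩ := h2
        exact ⟨w, by simpa using hw⟩
    by_cases hψ : SV ψ ∧ (vac ψ).card + (k + 1) = n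
    · rw [if_pos hψ]
      obtain ⟨hV, hc⟩ := hψ
      have hu : ∀ u, ∑ φ : Fin n → Option (Fin n), (cnt φ (some u) : ℚ) *
        ((Finset.univ.filter fun w => pstep φ u w = ψ).card * EC k φ) =
          if ¬ (ψ u = some u) then (k.factorial : ℚ) * wt κ β ψ else 0 := by
        intro u
        by_cases hu : ψ u ≠ some u
        · rw [if_pos hu]
          rw [← R_val κ β k0 hκ hβ hV hu, Finset.mul_sum]
          symm
          refine Finset.sum_of_injOn (put ψ u) ?_ ?_ ?_ ?_
          · intro D hD D' hD' h
            exact put_inj hV hu (by simpa using hD) (by simpa using hD') h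
          · intro D _; simp
          · intro φ _ hφ
            by_contra hne
            obtain ⟨h1, h2, h3, w, h4⟩ := key u φ hne
            obtain ⟨D, h5, h6⟩ := exists_put h1 h3 h4
            exact hφ ⟨D, by simpa using h5, h6⟩
          · intro D hD
            rw [Finset.mem_powerset] at hD
            rw [ih, if_pos ⟨put_SV hV hu hD, by rw [put_card hV hu hD]; omega⟩]
            ring
        · rw [if_neg hu]
          apply Finset.sum_eq_zero
          intro φ _
          by_contra hne
          obtain ⟨h1, h2, h3, w, h4⟩ := key u φ hne
          rw [ne_eq, not_not, ← h4, step_vac w h1 h3] at hu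
          exact hu.2 rfl
      rw [Finset.sum_congr rfl fun u _ => hu u, sum_ind]
      have h7 : (Finset.univ.filter fun u => ¬ (ψ u = some u)).card = k + 1 := by
        have := Finset.card_filter_add_card_filter_not (s := (Finset.univ : Finset (Fin n)))
          (fun u => ψ u = some u)
        simp only [vac] at hc
        simp only [Finset.card_univ, Fintype.card_fin] at this
        omega
      rw [h7, Nat.factorial_succ]
      push_cast
      ring
    · rw [if_neg hψ]
      apply Finset.sum_eq_zero
      intro u _
      apply Finset.sum_eq_zero
      intro φ _
      by_contra hne
      obtain ⟨h1, h2, h3, w, h4⟩ := key u φ hne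
      apply hψ
      have := step_card w h1 h3
      rw [← h4]
      exact ⟨step_SV w h1 h3, by omega⟩

section PS
open PowerSeries

/-- `exp (c X)` -/
noncomputable def ex (c : ℚ) : ℚ⟦X⟧ := rescale c (exp ℚ)

theorem ex_mul (a b : ℚ) : ex a * ex b = ex (a + b) := exp_mul_exp_eq_exp_add a b

theorem ex_zero : ex 0 = 1 := by
  unfold ex; rw [rescale_zero]; simp

theorem coeff_ex (c : ℚ) (j : ℕ) : coeff j (ex c) = c ^ j / j.factorial := by
  unfold ex; rw [coeff_rescale, coeff_exp]; simp; ring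

theorem ex_pow (c : ℚ) (k : ℕ) : ex c ^ k = ex (k * c) := by
  induction k with
  | zero => simp [ex_zero]
  | succ k ih => rw [pow_succ, ih, ex_mul]; congr 1; push_cast; ring

theorem der_ex (c : ℚ) : d⁄dX ℚ (ex c) = C c * ex c := by
  ext j
  rw [coeff_derivative, coeff_C_mul, coeff_ex, coeff_ex, Nat.factorial_succ]
  have : (j.factorial : ℚ) ≠ 0 := by exact_mod_cast j.factorial_ne_zero
  have : (j : ℚ) + 1 ≠ 0 := by positivity
  push_cast
  field_simp
  ring

theorem coeff_lag (c : ℚ) (j : ℕ) :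
    coeff (j + 1) ((1 - C 2 * X) * ex c) = c ^ j * (c - 2 * (j + 1)) / (j + 1).factorial := by
  rw [sub_mul, one_mul, map_sub, mul_assoc, coeff_C_mul, coeff_succ_X_mul, coeff_ex, coeff_ex,
    Nat.factorial_succ]
  have : (j.factorial : ℚ) ≠ 0 := by exact_mod_cast j.factorial_ne_zero
  have : (j : ℚ) + 1 ≠ 0 := by positivity
  push_cast
  field_simp
  ring

theorem const_ex (c : ℚ) : constantCoeff (ex c) = 1 := by
  rw [← coeff_zero_eq_constantCoeff_apply, coeff_ex]; simp

theorem const_lag (c : ℚ) : coeff 0 ((1 - C 2 * X) * ex c) = 1 := by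
  rw [coeff_zero_eq_constantCoeff, map_mul, const_ex]; simp

theorem lagrange (S : ℚ⟦X⟧ →ₐ[ℚ] ℚ⟦X⟧) (hS : S X = X * ex (-2)) (H : ℚ⟦X⟧) (m : ℕ) :
    coeff m H = coeff m (S H * ((1 - C 2 * X) * ex (2 * m))) := by
  obtain ⟨H', hH'⟩ : ∃ H', H = (trunc (m + 1) H : ℚ⟦X⟧) + X ^ (m + 1) * H' := by
    have : X ^ (m + 1) ∣ H - (trunc (m + 1) H : ℚ⟦X⟧) := by
      rw [X_pow_dvd_iff]
      intro i hi
      simp [coeff_trunc, hi]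
    obtain ⟨H', h⟩ := this
    exact ⟨H', by rw [← h]; ring⟩
  have h2 : (trunc (m + 1) H : ℚ⟦X⟧) = ∑ d ∈ Finset.range (m + 1), coeff d H • X ^ d := by
    ext i
    simp only [Polynomial.coeff_coe, coeff_trunc, map_sum, coeff_smul, coeff_X_pow, smul_eq_mul]
    simp
  have h3 : S H = (∑ d ∈ Finset.range (m + 1), coeff d H • (X * ex (-2)) ^ d) +
      X ^ (m + 1) * (ex (-2) ^ (m + 1) * S H') := by
    conv_lhs => rw [hH', h2]
    simp only [map_add, map_sum, map_smul, map_mul, map_pow, hS]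
    ring
  rw [h3, add_mul, map_add, Finset.sum_mul, map_sum, mul_assoc, coeff_X_pow_mul',
    if_neg (by omega), add_zero, Finset.sum_eq_single m]
  · rw [smul_mul_assoc, coeff_smul, mul_pow, ex_pow, mul_assoc, coeff_X_pow_mul', if_pos le_rfl,
      mul_left_comm, ex_mul, Nat.sub_self, const_lag]
    simp
  · intro d hd hdm
    rw [Finset.mem_range] at hd
    obtain ⟨j, rfl⟩ : ∃ j, m = d + (j + 1) := ⟨m - d - 1, by omega⟩
    rw [smul_mul_assoc, coeff_smul, mul_pow, ex_pow, mul_assoc, coeff_X_pow_mul', if_pos (by omega),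
      mul_left_comm, ex_mul, Nat.add_sub_cancel_left, coeff_lag]
    push_cast
    rw [show (d * -2 + 2 * ((d : ℚ) + (j + 1)) - 2 * (j + 1)) = 0 by ring]
    simp
  · simp

theorem exists_series : ∃ K Q B : ℚ⟦X⟧, coeff 0 K = 1 ∧ coeff 0 B = 1 ∧
    d⁄dX ℚ (X * K) = Q ∧ d⁄dX ℚ K = Q * Q ∧ B = 1 + X * (Q * B) ∧
    ∀ c m : ℕ, coeff m (K ^ c * B) =
      coeff m ((mk 1 : ℚ⟦X⟧) * (1 - X) ^ c * ((1 - C 2 * X) * ex (2 * (m + c)))) := by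
  set z : ℚ⟦X⟧ := X * ex (-2) with hz
  have hz0 : constantCoeff z = 0 := by simp [hz]
  have hz1 : IsUnit (coeff 1 z) := by
    rw [hz, show (1 : ℕ) = 0 + 1 from rfl, coeff_succ_X_mul, coeff_ex]; simp
  have hs : HasSubst z := HasSubst.of_constantCoeff_zero' hz0
  set S : ℚ⟦X⟧ →ₐ[ℚ] ℚ⟦X⟧ := substAlgHom hs with hSdef
  have hSX : S X = X * ex (-2) := substAlgHom_X hs
  have hsurj : ∀ P : ℚ⟦X⟧, ∃ H, S H = P := by
    intro P
    refine ⟨P.subst (z.substInvOfIsUnit hz1), ?_⟩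
    rw [hSdef, coe_substAlgHom, subst_comp_subst_apply (HasSubst.substInvOfIsUnit z hz1) hs,
      subst_substInvOfIsUnit_left z hz0, X_subst]
  have lag := lagrange S hSX
  have hinj : ∀ H H', S H = S H' → H = H' := by
    intro H H' h
    ext m
    rw [lag H, lag H', h]
  have hdz : d⁄dX ℚ z = (1 - C 2 * X) * ex (-2) := by
    rw [hz, Derivation.leibniz, der_ex, derivative_X]
    simp only [smul_eq_mul, map_neg, mul_one]
    ring
  have hdz0 : d⁄dX ℚ z ≠ 0 := by
    intro h
    have := const_lag (-2)
    rw [← hdz, h] at this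
    simp at this
  have chain : ∀ H, d⁄dX ℚ (S H) = S (d⁄dX ℚ H) * d⁄dX ℚ z := by
    intro H
    rw [hSdef, coe_substAlgHom]
    exact derivative_subst hs
  obtain ⟨K, hK⟩ := hsurj (ex 2 * (1 - X))
  obtain ⟨Q, hQ⟩ := hsurj (ex 2)
  obtain ⟨B, hB⟩ := hsurj (mk 1)
  have hone : (mk 1 : ℚ⟦X⟧) * (1 - X) = 1 := mk_one_mul_one_sub_eq_one ℚ
  have e20 : ex (-2) * ex 2 = 1 := by rw [ex_mul, ← ex_zero]; norm_num
  refine ⟨K, Q, B, ?_, ?_, ?_, ?_, ?_, ?_⟩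
  · rw [lag, hK]; simp [const_ex]
  · rw [lag, hB]; simp [const_ex]
  · apply hinj
    apply mul_right_cancel₀ hdz0
    rw [← chain, map_mul, hSX, hK, hQ, hdz]
    rw [show X * ex (-2) * (ex 2 * (1 - X)) = X * (1 - X) * (ex (-2) * ex 2) by ring,
      show ex 2 * ((1 - C 2 * X) * ex (-2)) = (1 - C 2 * X) * (ex (-2) * ex 2) by ring, e20]
    simp only [mul_one, Derivation.leibniz, map_sub, derivative_X, smul_eq_mul,
      Derivation.map_one_eq_zero]
    rw [show (C 2 : ℚ⟦X⟧) = 2 from map_ofNat C 2]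
    ring
  · apply hinj
    apply mul_right_cancel₀ hdz0
    rw [← chain, hK, map_mul S, hQ, hdz]
    rw [show ex 2 * ex 2 * ((1 - C 2 * X) * ex (-2)) = (1 - C 2 * X) * ex 2 * (ex (-2) * ex 2)
      by ring, e20]
    simp only [mul_one, Derivation.leibniz, map_sub, derivative_X, smul_eq_mul, der_ex,
      Derivation.map_one_eq_zero]
    rw [show (C 2 : ℚ⟦X⟧) = 2 from map_ofNat C 2]
    ring
  · apply hinj
    rw [map_add, map_mul, map_mul, hSX, hB, hQ, map_one]
    rw [show X * ex (-2) * (ex 2 * (mk 1 : ℚ⟦X⟧)) = X * mk 1 * (ex (-2) * ex 2) by ring, e20]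
    linear_combination hone
  · intro c m
    rw [lag, map_mul S, map_pow S, hK, hB, mul_pow, ex_pow]
    congr 1
    rw [show (2 : ℚ) * (m + c) = c * 2 + 2 * m by ring, ← ex_mul]
    ring

theorem genChoose_pascal (a : ℤ) (b : ℕ) :
    genChoose (a + 1) (b + 1) = genChoose a b + genChoose a (b + 1) := by
  unfold genChoose
  have h1 : ∏ i ∈ Finset.range (b + 1), (((a + 1 : ℤ) : ℚ) - (i : ℚ)) =
      (∏ i ∈ Finset.range b, ((a : ℚ) - (i : ℚ))) * (a + 1) := by
    rw [Finset.prod_range_succ']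
    push_cast
    congr 1
    · exact Finset.prod_congr rfl fun i _ => by ring
    · ring
  rw [h1, Finset.prod_range_succ, Nat.factorial_succ]
  have : (b.factorial : ℚ) ≠ 0 := by exact_mod_cast b.factorial_ne_zero
  have : (b : ℚ) + 1 ≠ 0 := by positivity
  push_cast
  field_simp
  ring

theorem genChoose_self (b : ℕ) : genChoose b b = 1 := by
  induction b with
  | zero => simp [genChoose]
  | succ b ih =>
    have := genChoose_pascal b b
    have h0 : genChoose b (b + 1) = 0 := by
      unfold genChoose
      rw [Finset.prod_range_succ]; simp
    rw [ih, h0] at this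
    push_cast
    rw [this]; simp

theorem genChoose_coeff (c b : ℕ) :
    genChoose ((b : ℤ) - c) b = coeff b ((mk 1 : ℚ⟦X⟧) * (1 - X) ^ c) := by
  induction c generalizing b with
  | zero => simp [genChoose_self]
  | succ c ih =>
    rw [pow_succ, ← mul_assoc, mul_sub, mul_one, map_sub]
    rcases b with _ | b
    · simp [← ih, genChoose]
      try rfl
    · rw [coeff_succ_mul_X, ← ih, ← ih]
      have := genChoose_pascal ((b : ℤ) - c) b
      push_cast
      rw [show (b : ℤ) + 1 - c = b - c + 1 by ring, this,
        show (b : ℤ) + 1 - (c + 1) = b - c by ring]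
      ring

theorem final_sum (n m : ℕ) (hm : m ≤ n) :
    ∑ j ∈ Finset.range (m + 1),
          genChoose (2 * (m : ℤ) - (n : ℤ) - (j : ℤ)) (m - j) * ((n : ℚ) - (j : ℚ)) *
              (2 * (n : ℚ)) ^ j / (Nat.factorial j : ℚ) =
    n * coeff m ((mk 1 : ℚ⟦X⟧) * (1 - X) ^ (n - m) * ((1 - C 2 * X) * ex (2 * n))) := by
  rw [mul_comm ((mk 1 : ℚ⟦X⟧) * (1 - X) ^ (n - m)), coeff_mul,
    Finset.Nat.sum_antidiagonal_eq_sum_range_succ_mk, Finset.mul_sum]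
  refine Finset.sum_congr rfl fun j hj => ?_
  rw [Finset.mem_range] at hj
  rw [← genChoose_coeff]
  have h1 : 2 * (m : ℤ) - (n : ℤ) - (j : ℤ) = ((m - j : ℕ) : ℤ) - ((n - m : ℕ) : ℤ) := by
    push_cast [Nat.cast_sub hm, Nat.cast_sub (show j ≤ m by omega)]; ring
  rw [h1]
  rcases j with _ | j
  · dsimp only
    rw [const_lag]; simp; ring
  · dsimp only
    rw [coeff_lag]
    push_cast
    ring

end PS

section mult
open PowerSeries

theorem der_prod {ι : Type*} [DecidableEq ι] (s : Finset ι) (P : ι → ℚ⟦X⟧) :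
    d⁄dX ℚ (∏ i ∈ s, P i) = ∑ j ∈ s, ∏ i ∈ s, (if j = i then d⁄dX ℚ (P i) else P i) := by
  induction s using Finset.induction_on with
  | empty => simp
  | insert a s ha ih =>
    rw [Finset.prod_insert ha, Derivation.leibniz, ih, Finset.sum_insert ha,
      Finset.prod_insert ha, if_pos rfl, smul_eq_mul, smul_eq_mul, add_comm, Finset.mul_sum]
    congr 1
    · rw [mul_comm]
      congr 1
      refine Finset.prod_congr rfl fun i hi => ?_
      rw [if_neg]
      rintro rfl; exact ha hi
    · refine Finset.sum_congr rfl fun j hj => ?_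
      rw [Finset.prod_insert ha, if_neg]
      rintro rfl; exact ha hj

theorem multi_fin {ι : Type*} [DecidableEq ι] [Fintype ι] (m : ℕ) (G : ι → ℕ → ℚ) :
    ∑ φ : Fin m → ι, ∏ i, G i (Finset.univ.filter fun x => φ x = i).card =
      (m.factorial : ℚ) * coeff m (∏ i, (PowerSeries.mk fun p => G i p / p.factorial)) := by
  induction m generalizing G with
  | zero =>
    simp only [Finset.univ_unique, Finset.sum_singleton, Finset.univ_eq_empty,
      Finset.filter_empty, Finset.card_empty, Nat.factorial_zero, Nat.cast_one, one_mul]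
    rw [coeff_zero_eq_constantCoeff, map_prod]
    refine Finset.prod_congr rfl fun i _ => ?_
    rw [← coeff_zero_eq_constantCoeff_apply, coeff_mk]
    simp
  | succ m ih =>
    have h1 : ((m + 1).factorial : ℚ) *
        coeff (m + 1) (∏ i, (PowerSeries.mk fun p => G i p / p.factorial)) =
        (m.factorial : ℚ) * coeff m (d⁄dX ℚ (∏ i, (PowerSeries.mk fun p => G i p / p.factorial))) := by
      rw [coeff_derivative, Nat.factorial_succ]
      push_cast; ring
    rw [h1, der_prod, map_sum, Finset.mul_sum]
    rw [← (Fin.consEquiv (fun _ : Fin (m + 1) => ι)).sum_comp, Fintype.sum_prod_type]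
    refine Finset.sum_congr rfl fun j _ => ?_
    have h2 := ih (fun i p => G i (p + if j = i then 1 else 0))
    have h3 : (∏ i, (if j = i then d⁄dX ℚ (PowerSeries.mk fun p => G i p / p.factorial) else
        (PowerSeries.mk fun p => G i p / p.factorial))) =
        ∏ i, (PowerSeries.mk fun p => G i (p + if j = i then 1 else 0) / p.factorial) := by
      refine Finset.prod_congr rfl fun i _ => ?_
      split_ifs with h
      · ext p
        rw [coeff_derivative, coeff_mk, coeff_mk, Nat.factorial_succ]
        have : (p.factorial : ℚ) ≠ 0 := by exact_mod_cast p.factorial_ne_zero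
        have : (p : ℚ) + 1 ≠ 0 := by positivity
        push_cast
        field_simp
      · rfl
    rw [h3, ← h2]
    refine Finset.sum_congr rfl fun φ _ => ?_
    refine Finset.prod_congr rfl fun i _ => ?_
    congr 1
    rw [Finset.card_filter, Finset.card_filter, Fin.sum_univ_succ, add_comm]
    simp [Fin.consEquiv]

theorem multi {ι : Type*} [DecidableEq ι] [Fintype ι] {α : Type*} [Fintype α] [DecidableEq α]
    (m : ℕ) (hα : Fintype.card α = m) (G : ι → ℕ → ℚ) :
    ∑ φ : α → ι, ∏ i, G i (Finset.univ.filter fun x => φ x = i).card =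
      (m.factorial : ℚ) * coeff m (∏ i, (PowerSeries.mk fun p => G i p / p.factorial)) := by
  rw [← multi_fin]
  let e : α ≃ Fin m := Fintype.equivFinOfCardEq hα
  rw [← (Equiv.arrowCongr e (Equiv.refl ι)).sum_comp]
  refine Finset.sum_congr rfl fun φ _ => ?_
  refine Finset.prod_congr rfl fun i _ => ?_
  congr 1
  refine Finset.card_equiv e ?_
  intro x
  simp

/-- weights from a series -/
noncomputable def kap (K : ℚ⟦X⟧) : ℕ → ℚ
  | 0 => 1
  | p + 1 => p.factorial * coeff p K

/-- weights from a series -/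
noncomputable def bet (B : ℚ⟦X⟧) (p : ℕ) : ℚ := p.factorial * coeff p B

theorem choose_rat (p i : ℕ) (h : i ≤ p) :
    (p.choose i : ℚ) * (i.factorial * (p - i).factorial) = p.factorial := by
  rw [← mul_assoc]
  exact_mod_cast Nat.choose_mul_factorial_mul_factorial h

theorem kap_q (K Q : ℚ⟦X⟧) (h : d⁄dX ℚ (X * K) = Q) (p : ℕ) :
    ((p : ℚ) + 1) * kap K (p + 1) = p.factorial * coeff p Q := by
  rw [← h, coeff_derivative, coeff_succ_X_mul, kap]
  ring

theorem kap_rec (K Q : ℚ⟦X⟧) (h : d⁄dX ℚ (X * K) = Q) (h' : d⁄dX ℚ K = Q * Q) (p : ℕ) :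
    ∑ i ∈ Finset.range (p + 1), (p.choose i : ℚ) *
      (((i : ℚ) + 1) * kap K (i + 1) * (((p - i : ℕ) + 1 : ℚ) * kap K (p - i + 1))) =
      kap K (p + 2) := by
  have h2 : kap K (p + 2) = p.factorial * coeff p (Q * Q) := by
    rw [← h', coeff_derivative, kap, Nat.factorial_succ]
    push_cast; ring
  rw [h2, coeff_mul, Finset.Nat.sum_antidiagonal_eq_sum_range_succ_mk, Finset.mul_sum]
  refine Finset.sum_congr rfl fun i hi => ?_
  rw [kap_q K Q h, kap_q K Q h, ← choose_rat p i (by simp at hi; omega)]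
  ring

theorem bet_rec (K Q B : ℚ⟦X⟧) (h : d⁄dX ℚ (X * K) = Q) (h' : B = 1 + X * (Q * B)) (p : ℕ) :
    ((p : ℚ) + 1) * ∑ i ∈ Finset.range (p + 1), (p.choose i : ℚ) *
      (((i : ℚ) + 1) * kap K (i + 1) * bet B (p - i)) = bet B (p + 1) := by
  have h2 : bet B (p + 1) = (p + 1) * (p.factorial * coeff p (Q * B)) := by
    rw [bet, h', map_add, coeff_succ_X_mul, ← h', Nat.factorial_succ, coeff_one]
    push_cast
    simp
    ring
  rw [h2, coeff_mul, Finset.Nat.sum_antidiagonal_eq_sum_range_succ_mk, Finset.mul_sum (a := (p.factorial : ℚ))]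
  congr 1
  refine Finset.sum_congr rfl fun i hi => ?_
  rw [kap_q K Q h, ← choose_rat p i (by simp at hi; omega), bet]
  ring

/-- extension by the identity on `U` -/
def extU {n : ℕ} (U : Finset (Fin n)) (φ : {v : Fin n // v ∉ U} → Option (Fin n)) :
    Fin n → Option (Fin n) :=
  fun v => if h : v ∈ U then some v else φ ⟨v, h⟩

theorem extU_mem {n : ℕ} {U : Finset (Fin n)} (φ : {v : Fin n // v ∉ U} → Option (Fin n))
    {v : Fin n} (h : v ∈ U) : extU U φ v = some v := by
  simp [extU, h]

theorem extU_notMem {n : ℕ} {U : Finset (Fin n)} (φ : {v : Fin n // v ∉ U} → Option (Fin n))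
    (x : {v : Fin n // v ∉ U}) : extU U φ x = φ x := by
  simp [extU, x.2]

theorem cnt_extU {n : ℕ} {U : Finset (Fin n)} (φ : {v : Fin n // v ∉ U} → Option (Fin n))
    (z : Option (Fin n)) : cnt (extU U φ) z = (∑ v ∈ U, if some v = z then 1 else 0) +
      (Finset.univ.filter fun x => φ x = z).card := by
  rw [cnt, Finset.card_filter, Finset.card_filter,
    ← Fintype.sum_subtype_add_sum_subtype (fun v => v ∈ U)]
  congr 1
  · rw [← Finset.sum_coe_sort U]
    refine Finset.sum_congr (by ext; simp) fun v _ => ?_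
    rw [extU_mem φ v.2]
  · refine Finset.sum_congr (by ext; simp) fun v _ => ?_
    rw [extU_notMem φ v]

/-- local weights -/
noncomputable def gam {n : ℕ} (U : Finset (Fin n)) (K B : ℚ⟦X⟧) : Option (Fin n) → ℕ → ℚ
  | none, p => bet B p
  | some y, p => if y ∈ U then kap K (p + 1) else if p = 0 then 1 else 0

open Classical in
theorem gam_eq {n : ℕ} (U : Finset (Fin n)) (K B : ℚ⟦X⟧)
    (φ : {v : Fin n // v ∉ U} → Option (Fin n)) :
    ∏ i, gam U K B i (Finset.univ.filter fun x => φ x = i).card =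
      if SV (extU U φ) ∧ vac (extU U φ) = U then wt (kap K) (bet B) (extU U φ) else 0 := by
  by_cases h : ∀ x y, φ x = some y → y ∈ U
  · have hv : ∀ y, extU U φ y = some y ↔ y ∈ U := by
      intro y
      refine ⟨fun h1 => ?_, extU_mem φ⟩
      by_contra h2
      have h3 := extU_notMem φ ⟨y, h2⟩
      simp only at h3
      rw [h1] at h3
      exact h2 (h _ _ h3.symm)
    have hs : SV (extU U φ) := by
      intro v u huv
      rw [hv]
      by_cases h2 : v ∈ U
      · rw [extU_mem φ h2] at huv
        simp at huv
        exact huv ▸ h2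
      · rw [extU_notMem φ ⟨v, h2⟩] at huv
        exact h _ _ huv
    rw [if_pos ⟨hs, by ext y; simp [vac, hv]⟩, Fintype.prod_option, wt, mul_comm]
    congr 1
    · refine Finset.prod_congr rfl fun y _ => ?_
      rw [cnt_extU]
      by_cases hy : y ∈ U
      · simp [gam, hy, add_comm]
      · have h0 : (Finset.univ.filter fun x => φ x = some y).card = 0 := by
          rw [Finset.card_eq_zero, Finset.filter_eq_empty_iff]
          intro x _ hx
          exact hy (h _ _ hx)
        rw [h0]
        simp [gam, hy, kap]
    · rw [cnt_extU]
      simp [gam]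
  · push Not at h
    obtain ⟨x, y, hxy, hy⟩ := h
    rw [if_neg, Finset.prod_eq_zero (Finset.mem_univ (some y))]
    · simp only [gam, if_neg hy]
      rw [if_neg]
      rw [Finset.card_eq_zero, Finset.filter_eq_empty_iff]
      intro h1
      exact h1 (Finset.mem_univ x) hxy
    · rintro ⟨h1, h2⟩
      have h3 := h1 x y (by rw [extU_notMem, hxy])
      apply hy
      rw [← h2]
      simpa [vac] using h3

theorem gam_series {n : ℕ} (U : Finset (Fin n)) (K B : ℚ⟦X⟧) :
    (∏ i, (PowerSeries.mk fun p => gam U K B i p / p.factorial)) = K ^ U.card * B := by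
  have hf : ∀ p : ℕ, (p.factorial : ℚ) ≠ 0 := fun p => by exact_mod_cast p.factorial_ne_zero
  rw [Fintype.prod_option, mul_comm]
  congr 1
  · have : ∀ y, (PowerSeries.mk fun p => gam U K B (some y) p / p.factorial) =
        if y ∈ U then K else 1 := by
      intro y
      split_ifs with h
      · ext p
        rw [coeff_mk]
        simp only [gam, if_pos h, kap]
        rw [mul_div_cancel_left₀ _ (hf p)]
      · ext p
        rw [coeff_mk, coeff_one]
        simp only [gam, if_neg h]
        split_ifs with h1
        · simp [h1]
        · simp
    simp only [this]
    rw [Finset.prod_ite_mem]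
    simp
  · ext p
    rw [coeff_mk]
    simp only [gam, bet]
    rw [mul_div_cancel_left₀ _ (hf p)]

open Classical in
theorem sum_U {n m : ℕ} (U : Finset (Fin n)) (hU : U.card + m = n) (K B : ℚ⟦X⟧) :
    ∑ ψ : Fin n → Option (Fin n), (if SV ψ ∧ vac ψ = U then wt (kap K) (bet B) ψ else 0) =
      m.factorial * coeff m (K ^ U.card * B) := by
  rw [← gam_series, ← multi (α := {v : Fin n // v ∉ U}) m]
  · symm
    refine Finset.sum_of_injOn (extU U) ?_ ?_ ?_ ?_
    · intro φ _ φ' _ h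
      funext x
      rw [← extU_notMem φ, h, extU_notMem]
    · intro φ _; simp
    · intro ψ _ hψ
      rw [if_neg]
      rintro ⟨h1, h2⟩
      apply hψ
      refine ⟨fun x => ψ x, by simp, ?_⟩
      funext v
      by_cases hv : v ∈ U
      · rw [extU_mem _ hv]
        rw [← h2] at hv
        symm
        simpa [vac] using hv
      · exact extU_notMem (fun x => ψ x) ⟨v, hv⟩
    · intro φ _
      rw [← gam_eq]
  · rw [Fintype.card_subtype_compl]
    simp
    omega

open Classical in
theorem JC_val {n m : ℕ} (hm : m ≤ n) (K Q B : ℚ⟦X⟧) (hK0 : coeff 0 K = 1)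
    (hB0 : coeff 0 B = 1) (h1 : d⁄dX ℚ (X * K) = Q) (h2 : d⁄dX ℚ K = Q * Q)
    (h3 : B = 1 + X * (Q * B)) :
    JC m (fun v : Fin n => some v) =
      m.factorial * (n.choose (n - m) * (m.factorial * coeff m (K ^ (n - m) * B))) := by
  rw [JC_eq]
  simp only [EC_eq (kap K) (bet B) rfl (by simp [kap, -coeff_zero_eq_constantCoeff, hK0])
    (by simp [bet, -coeff_zero_eq_constantCoeff, hB0])
    (kap_rec K Q h1 h2) (bet_rec K Q B h1 h3)]
  have h4 : ∀ ψ : Fin n → Option (Fin n),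
      (if SV ψ ∧ (vac ψ).card + m = n then (m.factorial : ℚ) * wt (kap K) (bet B) ψ else 0) =
      m.factorial * ∑ U ∈ Finset.powersetCard (n - m) Finset.univ,
        if SV ψ ∧ vac ψ = U then wt (kap K) (bet B) ψ else 0 := by
    intro ψ
    by_cases hV : SV ψ
    · simp only [hV, true_and]
      rw [Finset.sum_ite_eq]
      simp only [Finset.mem_powersetCard, Finset.subset_univ, true_and]
      have : (vac ψ).card + m = n ↔ (vac ψ).card = n - m := by omega
      simp only [this]
      split_ifs <;> simp
    · simp [hV]
  rw [Finset.sum_congr rfl fun ψ _ => h4 ψ, ← Finset.mul_sum, Finset.sum_comm]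
  congr 1
  rw [Finset.sum_congr rfl (g := fun _ => (m.factorial * coeff m (K ^ (n - m) * B)))]
  · rw [Finset.sum_const, Finset.card_powersetCard, nsmul_eq_mul]
    simp
  · intro U hU
    rw [Finset.mem_powersetCard] at hU
    rw [sum_U U (m := m) (by omega), hU.2]

end mult
/-- (Lackner–Panholzer, Corollary 4.6) For all `n ≥ 1` and `0 ≤ m ≤ n`,
`F_{n,m} = ((n-1)! m! n^(n-m-1) / (n-m)!) Σ_{j=0}^{m} binom(2m-n-j, m-j) (n-j)(2n)^j / j!`,
as an identity of rational numbers (with generalized binomial coefficients; the power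
`n^(n-m-1)` is taken with integer exponent, since it equals `n^{-1}` when `m = n`). -/
theorem lackner_panholzer_corollary_4_6 (n m : ℕ) (hn : 1 ≤ n) (hm : m ≤ n) :
    (FCount n m : ℚ) =
      (Nat.factorial (n - 1) : ℚ) * (Nat.factorial m : ℚ) *
            (n : ℚ) ^ ((n : ℤ) - (m : ℤ) - 1) /
          (Nat.factorial (n - m) : ℚ) *
        ∑ j ∈ Finset.range (m + 1),
          genChoose (2 * (m : ℤ) - (n : ℤ) - (j : ℤ)) (m - j) * ((n : ℚ) - (j : ℚ)) *
              (2 * (n : ℚ)) ^ j / (Nat.factorial j : ℚ) := by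
  obtain ⟨K, Q, B, hK0, hB0, h1, h2, h3, h4⟩ := exists_series
  have hp := part_one (n := n) (by omega) m
  rw [JC_val hm K Q B hK0 hB0 h1 h2 h3, h4] at hp
  have hs := final_sum n m hm
  have hmn : ((m : ℚ) + ((n - m : ℕ) : ℚ)) = n := by
    rw [Nat.cast_sub hm]; ring
  rw [hmn] at hp
  generalize PowerSeries.coeff (R := ℚ) m _ = c at hp hs
  rw [hs]
  have hn0 : (n : ℚ) ≠ 0 := by
    have : n ≠ 0 := by omega
    exact_mod_cast this
  have hf : ∀ p : ℕ, (p.factorial : ℚ) ≠ 0 := fun p => by exact_mod_cast p.factorial_ne_zero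
  have hc : (n.choose (n - m) : ℚ) * (n - m).factorial * m.factorial = n * (n - 1).factorial := by
    have h5 := Nat.choose_mul_factorial_mul_factorial (Nat.sub_le n m)
    rw [Nat.sub_sub_self hm] at h5
    have h6 := Nat.mul_factorial_pred (show n ≠ 0 by omega)
    rw [← h6] at h5
    exact_mod_cast h5
  have hz : (n : ℚ) ^ ((n : ℤ) - (m : ℤ) - 1) = (n : ℚ) ^ n / (n : ℚ) ^ (m + 1) := by
    rw [sub_sub, zpow_sub₀ hn0, zpow_natCast]
    norm_cast
  rw [hz]
  have hpow : (n : ℚ) ^ (m + 1) ≠ 0 := pow_ne_zero _ hn0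
  have h7 := hf (n - m)
  apply mul_left_cancel₀ hpow
  rw [hp]
  field_simp
  linear_combination c * hc
end
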